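/- arXiv:2503.21580 — 2 statements merged into one kernel-verified Lean document; each statement's English description precedes it below -/
import Mathlib

section
/- Let φ(x,t) = t^p + a(x) t^q with 1 < p < q < ∞, a a nonnegative function in C^{0,α}(ℝⁿ) for some α ∈ (0,1], and assume q/p ≤ 1 + α/n. Let z ∈ ℝⁿ, r > 0, and let u be Lipschitz on B(z,r). Let 1 ≤ m ≤ p, and if m < n assume additionally that q ≤ nm/(n−m). Set Z = {x ∈ B̄(0,1/2) : u(z + rx) = 0}, and assume cap_m(Z; B(0,1)) > 0. Let y ∈ ℝⁿ, R > 0, and let a*_{y,R} denote either inf_{B(y,R)} a or sup_{B(y,R)} a, with φ*_{y,R}(t) = t^p + a*_{y,R} t^q. Then there is a constant c = c(n,p,q,m) such that ⨍_{B(z,r)} φ*_{y,R}(|u|) dx ≤ c · (1 + a*_{y,R} · cap_m(Z;B(0,1))^{(p−q)/m} · ((⨍_{B(z,r)} |r∇u|^m dx)^{1/m})^{q−p}) / cap_m(Z;B(0,1))^{p/m} · (⨍_{B(z,r)} |r∇u|^m dx)^{p/m}. -/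
open MeasureTheory Metric Set

noncomputable section

/-- Euclidean space `ℝⁿ`. -/
abbrev En (n : ℕ) : Type := EuclideanSpace ℝ (Fin n)

/-- Norm of the (a.e. defined, by Rademacher's theorem) gradient of `u` at `x`. -/
def gnorm {n : ℕ} (u : En n → ℝ) (x : En n) : ℝ := ‖fderiv ℝ u x‖

/-- Admissible test functions for the level-`t` capacity of `E` in `O`:
Lipschitz on the closure of `O`, `u ≥ t` on `E`, `u = 0` on `∂O`. -/
def Adm {n : ℕ} (E O : Set (En n)) (t : ℝ) : Set (En n → ℝ) :=
  {u | (∃ K, LipschitzOnWith K u (closure O)) ∧ (∀ x ∈ E, t ≤ u x) ∧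
    ∀ x ∈ frontier O, u x = 0}

/-- Level-`t` variational capacity with integrand `ψ` and normalization `ψm`. -/
def capLevel {n : ℕ} (ψ : En n → ℝ → ℝ) (ψm : ℝ → ℝ)
    (E O : Set (En n)) (t : ℝ) : ℝ :=
  sInf ((fun u => ∫ x in O, ψ x (gnorm u x) / ψm t) '' Adm E O t)

/-- Infimal capacity with integrand `ψ` and normalization `ψm`. -/
def capInfGen {n : ℕ} (ψ : En n → ℝ → ℝ) (ψm : ℝ → ℝ) (E O : Set (En n)) : ℝ :=
  ⨅ t : Ioi (0 : ℝ), capLevel ψ ψm E O (t : ℝ)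

/-- The double-phase integrand `φ(x,t) = t^p + a(x) t^q`. -/
def phi {n : ℕ} (a : En n → ℝ) (p q : ℝ) (x : En n) (t : ℝ) : ℝ :=
  t ^ p + a x * t ^ q

/-- `a_O^- = inf_{x ∈ O} a(x)`. -/
def aInfOn {n : ℕ} (a : En n → ℝ) (O : Set (En n)) : ℝ := sInf (a '' O)

/-- `a_O^+ = sup_{x ∈ O} a(x)`. -/
def aSupOn {n : ℕ} (a : En n → ℝ) (O : Set (En n)) : ℝ := sSup (a '' O)

/-- `φ_O^-(t) = t^p + a_O^- t^q`. -/
def phiMinus {n : ℕ} (a : En n → ℝ) (p q : ℝ) (O : Set (En n)) (t : ℝ) : ℝ :=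
  t ^ p + aInfOn a O * t ^ q

/-- Level-`t` variational capacity for the double-phase integrand. -/
def capPhiLevel {n : ℕ} (a : En n → ℝ) (p q t : ℝ) (E O : Set (En n)) : ℝ :=
  capLevel (phi a p q) (phiMinus a p q O) E O t

/-- Infimal `φ`-capacity. -/
def capPhiInf {n : ℕ} (a : En n → ℝ) (p q : ℝ) (E O : Set (En n)) : ℝ :=
  ⨅ t : Ioi (0 : ℝ), capPhiLevel a p q (t : ℝ) E O

/-- Variational `p`-capacity. -/
def capP {n : ℕ} (p : ℝ) (E O : Set (En n)) : ℝ :=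
  sInf ((fun u => ∫ x in O, gnorm u x ^ p) '' Adm E O 1)

/-- The rescaled set `{x ∈ B̄(0,1/2) : z + r x ∈ E}`. -/
def shiftedSet {n : ℕ} (E : Set (En n)) (z : En n) (r : ℝ) : Set (En n) :=
  {x ∈ closedBall (0 : En n) (1 / 2) | z + r • x ∈ E}

/-- Local uniform infimal `φ`-fatness with parameters `cfat` and `ro`. -/
def LocUnifPhiFat {n : ℕ} (a : En n → ℝ) (p q : ℝ) (E : Set (En n))
    (cfat ro : ℝ) : Prop :=
  ∀ z ∈ E, ∀ r : ℝ, 0 < r → r < ro →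
    cfat ≤ capPhiInf (fun x => a (z + r • x)) p q (shiftedSet E z r) (ball (0 : En n) 1)

/-- Local uniform `p`-fatness with parameters `cfat` and `ro`. -/
def LocUnifPFat {n : ℕ} (p : ℝ) (E : Set (En n)) (cfat ro : ℝ) : Prop :=
  ∀ z ∈ E, ∀ r : ℝ, 0 < r → r < ro →
    cfat ≤ capP p (shiftedSet E z r) (ball (0 : En n) 1)

/-- `Lip_0(Ω)`: Lipschitz functions with compact support contained in `Ω`,
extended by zero to `ℝⁿ`. -/
def Lip0 {n : ℕ} (Ω : Set (En n)) : Set (En n → ℝ) :=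
  {u | (∃ K, LipschitzWith K u) ∧ HasCompactSupport u ∧ tsupport u ⊆ Ω}

/-- Restricted centered maximal operator `M_R f(x) = sup_{0<r<R} ⨍_{B(x,r)} |f|`. -/
def maxOp {n : ℕ} (R : ℝ) (f : En n → ℝ) (x : En n) : ℝ :=
  ⨆ r : Ioo (0 : ℝ) R, ⨍ y in ball x (r : ℝ), |f y|

/-!
After rescaling to the unit ball `B`, put `g = (⨍_B |∇V|^m)^{1/m}`.  The Sobolev–Poincaré
inequality `‖V - V_B‖_s ≤ C g` on `B` follows by applying the Gagliardo–Nirenberg–Sobolev inequality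
to a cut-off of the extension of `V - V_B` across the unit sphere by inversion; the lower order term
which the cut-off creates is absorbed by the Poincaré inequality, proved by integrating along
segments.  These inequalities pass from smooth to Lipschitz functions by mollification.

If `V = 0` on `Z`, then `η (1 - V / V_B)`, with `η` a cut-off function equal to `1` on `Z`, is
admissible for the capacity.  By Poincaré its gradient has `L^m` norm at most `C g / |V_B|`, whence
`cap_m(Z; B)^{1/m} |V_B| ≤ C g`.  Together with Sobolev–Poincaré this gives
`⨍ |V|^s ≤ C (g^m / cap_m(Z; B))^{s/m}`, which is summed over `s = p` and `s = q`.
-/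

open Filter Topology Convolution ContinuousLinearMap
open scoped NNReal ENNReal

section Mollification

variable {E F : Type*} [NormedAddCommGroup E] [NormedSpace ℝ E]

/-- The bump function of outer radius `1 / (k + 1)` with which `mollify` averages; the ratio of the
radii is fixed, as the Lebesgue differentiation theorem requires. -/
def mollifier (E : Type*) [NormedAddCommGroup E] [NormedSpace ℝ E] (k : ℕ) :
    ContDiffBump (0 : E) where
  rIn := 1 / ((k : ℝ) + 1) / 2
  rOut := 1 / ((k : ℝ) + 1)
  rIn_pos := by positivity
  rIn_lt_rOut := half_lt_self (by positivity)

lemma tendsto_mollifier_rOut : Tendsto (fun k => (mollifier E k).rOut) atTop (𝓝 0) :=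
  tendsto_one_div_add_atTop_nhds_zero_nat

lemma mollifier_rOut_le_one (k : ℕ) : (mollifier E k).rOut ≤ 1 := by
  have : 1 / ((k : ℝ) + 1) ≤ 1 := by simpa using Nat.one_div_le_one_div (α := ℝ) (Nat.zero_le k)
  exact this

variable [FiniteDimensional ℝ E] [MeasurableSpace E] [BorelSpace E] [NormedAddCommGroup F]
  [NormedSpace ℝ F] {μ : Measure E} [μ.IsAddHaarMeasure] {V : E → F} {K : ℝ≥0}

/-- The mollification of `V` at scale `1 / (k + 1)`. -/
def mollify (μ : Measure E) (V : E → F) (k : ℕ) : E → F :=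
  (mollifier E k).normed μ ⋆[lsmul ℝ ℝ, μ] V

lemma contDiff_mollify (hV : LocallyIntegrable V μ) (k : ℕ) : ContDiff ℝ 1 (mollify μ V k) :=
  (mollifier E k).hasCompactSupport_normed.contDiff_convolution_left _
    (mollifier E k).contDiff_normed hV

lemma norm_mollify_le {C : ℝ} (hV : ∀ x, ‖V x‖ ≤ C) (k : ℕ) (x : E) : ‖mollify μ V k x‖ ≤ C := by
  have := norm_integral_le_of_norm_le (μ := μ)
    (f := fun t => (mollifier E k).normed μ t • V (x - t))
    ((mollifier E k).integrable_normed.mul_const C) (.of_forall fun t => by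
      rw [norm_smul, Real.norm_of_nonneg ((mollifier E k).nonneg_normed t)]
      exact mul_le_mul_of_nonneg_left (hV _) ((mollifier E k).nonneg_normed t))
  rwa [integral_mul_const, (mollifier E k).integral_normed, one_mul] at this

variable [FiniteDimensional ℝ F]

lemma tendsto_mollify (hV : Continuous V) (x : E) :
    Tendsto (fun k => mollify μ V k x) atTop (𝓝 (V x)) :=
  ContDiffBump.convolution_tendsto_right_of_continuous tendsto_mollifier_rOut hV x

lemma dist_mollify_le (hV : LipschitzWith K V) (k : ℕ) (x : E) :
    dist (mollify μ V k x) (V x) ≤ K :=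
  ContDiffBump.dist_normed_convolution_le hV.continuous.aestronglyMeasurable fun _ hy =>
    hV.dist_le_mul_of_le ((mem_ball.1 hy).le.trans (mollifier_rOut_le_one k)) |>.trans_eq
      (mul_one _)

lemma tendsto_setAverage_mollify (hV : LipschitzWith K V) {s : Set E}
    (hs : Bornology.IsBounded s) :
    Tendsto (fun k => ⨍ y in s, mollify μ V k y ∂μ) atTop (𝓝 (⨍ y in s, V y ∂μ)) := by
  simp only [setAverage_eq]
  have hbound : IntegrableOn (fun x => ‖V x‖ + K) s μ :=
    ((hV.continuous.norm.add continuous_const).continuousOn.integrableOn_compact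
      hs.isCompact_closure).mono_set subset_closure
  refine (tendsto_integral_of_dominated_convergence _ (fun k => (contDiff_mollify
    hV.continuous.locallyIntegrable k).continuous.aestronglyMeasurable) hbound
    (fun k => .of_forall fun x => ?_) (.of_forall (tendsto_mollify hV.continuous))).const_smul _
  rw [← dist_zero_right, ← dist_zero_right, add_comm]
  exact (dist_triangle _ (V x) 0).trans (by gcongr; exact dist_mollify_le hV k x)

lemma support_mollify_subset (V : E → F) (k : ℕ) :
    Function.support (mollify μ V k) ⊆ cthickening 1 (Function.support V) := by
  intro x hx
  by_contra hfar
  have hVx : ∀ y ∈ ball x 1, V y = 0 := fun y hy => by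
    by_contra hVy
    exact hfar (mem_cthickening_of_dist_le x y 1 _ hVy (mem_ball'.1 hy).le)
  have hVx0 := hVx x (mem_ball_self one_pos)
  refine hx (((mollifier E k).normed_convolution_eq_right (μ := μ) fun y hy => ?_).trans hVx0)
  rw [hVx y (ball_subset_ball (mollifier_rOut_le_one k) hy), hVx0]

lemma hasFDerivAt_convolution_of_lipschitzWith {g : E → ℝ} (hg : Continuous g)
    (hgc : HasCompactSupport g) (hV : LipschitzWith K V) (x : E) :
    HasFDerivAt (g ⋆[lsmul ℝ ℝ, μ] V) ((g ⋆[lsmul ℝ ℝ, μ] fderiv ℝ V) x) x := by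
  have hint : ∀ y, Integrable (fun t => g t • V (y - t)) μ := fun y =>
    (hg.smul (hV.continuous.comp
      (continuous_const.sub continuous_id))).integrable_of_hasCompactSupport hgc.smul_right
  have hdiff : ∀ᵐ t ∂μ, DifferentiableAt ℝ V (x - t) :=
    (quasiMeasurePreserving_sub_left μ x).ae hV.ae_differentiableAt
  refine (hasFDerivAt_integral_of_dominated_loc_of_lip (s := univ)
    (bound := fun t => ‖g t‖ * K) (F := fun y t => g t • V (y - t))
    (F' := fun t => g t • fderiv ℝ V (x - t)) univ_mem
    (.of_forall fun y => (hint y).aestronglyMeasurable) (hint x) ?_ (.of_forall fun t => ?_)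
    ((hg.integrable_of_hasCompactSupport hgc).norm.mul_const _) ?_).2
  · exact (hg.measurable.smul ((measurable_fderiv ℝ V).comp
      (measurable_const.sub measurable_id))).aestronglyMeasurable
  · refine LipschitzOnWith.of_dist_le_mul fun y _ w _ => ?_
    have := hV.dist_le_mul (y - t) (w - t)
    rw [dist_sub_right] at this
    rw [dist_smul₀, Real.coe_nnabs, abs_of_nonneg (by positivity), mul_assoc]
    gcongr
  · filter_upwards [hdiff] with t ht
    have hshift : HasFDerivAt (fun y => V (y - t)) (fderiv ℝ V (x - t)) x :=
      ht.hasFDerivAt.comp x ((hasFDerivAt_id x).sub_const t)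
    exact hshift.const_smul (g t)

lemma fderiv_mollify (hV : LipschitzWith K V) (k : ℕ) :
    fderiv ℝ (mollify μ V k) = mollify μ (fderiv ℝ V) k :=
  funext fun x => (hasFDerivAt_convolution_of_lipschitzWith (mollifier E k).continuous_normed
    (mollifier E k).hasCompactSupport_normed hV x).fderiv

lemma norm_fderiv_mollify_le (hV : LipschitzWith K V) (k : ℕ) (x : E) :
    ‖fderiv ℝ (mollify μ V k) x‖ ≤ K := by
  rw [fderiv_mollify hV]
  exact norm_mollify_le (fun y => norm_fderiv_le_of_lipschitz ℝ hV) k x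

lemma ae_tendsto_fderiv_mollify (hV : LipschitzWith K V) :
    ∀ᵐ x ∂μ, Tendsto (fun k => fderiv ℝ (mollify μ V k) x) atTop (𝓝 (fderiv ℝ V x)) := by
  have hloc : LocallyIntegrable (fderiv ℝ V) μ :=
    (locallyIntegrable_const (K : ℝ)).mono (measurable_fderiv ℝ V).aestronglyMeasurable
      (.of_forall fun x => by simpa using norm_fderiv_le_of_lipschitz ℝ hV)
  have hratio : ∀ k, (mollifier E k).rOut ≤ 2 * (mollifier E k).rIn := fun k =>
    (mul_div_cancel₀ _ two_ne_zero).ge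
  filter_upwards [ContDiffBump.ae_convolution_tendsto_right_of_locallyIntegrable
    tendsto_mollifier_rOut (.of_forall hratio) hloc] with x hx
  simp only [fderiv_mollify hV]
  exact hx

lemma tendsto_eLpNorm_of_norm_le {α G : Type*} [MeasurableSpace α] {ν : Measure α}
    [IsFiniteMeasure ν] [NormedAddCommGroup G] {m : ℝ≥0} (hm : m ≠ 0)
    {f : ℕ → α → G} {g : α → G} (hf : ∀ k, AEStronglyMeasurable (f k) ν)
    (hb : ∀ k x, ‖f k x‖ ≤ K) (hlim : ∀ᵐ x ∂ν, Tendsto (fun k => f k x) atTop (𝓝 (g x))) :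
    Tendsto (fun k => eLpNorm (f k) m ν) atTop (𝓝 (eLpNorm g m ν)) := by
  simp only [eLpNorm_nnreal_eq_lintegral hm]
  refine (ENNReal.continuous_rpow_const.tendsto _).comp
    (tendsto_lintegral_of_dominated_convergence' (fun _ => (K : ℝ≥0∞) ^ (m : ℝ))
      (fun k => (hf k).enorm.pow_const _)
      (fun k => .of_forall fun x => ENNReal.rpow_le_rpow (enorm_le_coe.2 (hb k x)) m.2) ?_ ?_)
  · rw [lintegral_const]
    exact ENNReal.mul_ne_top (ENNReal.rpow_ne_top_of_nonneg m.2 ENNReal.coe_ne_top)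
      (measure_ne_top _ _)
  · filter_upwards [hlim] with x hx
    exact (ENNReal.continuous_rpow_const.tendsto _).comp hx.enorm

lemma tendsto_eLpNorm_fderiv_mollify (hV : LipschitzWith K V) {m : ℝ≥0} (hm : m ≠ 0)
    {s : Set E} (hs : μ s ≠ ⊤) :
    Tendsto (fun k => eLpNorm (fderiv ℝ (mollify μ V k)) m (μ.restrict s)) atTop
      (𝓝 (eLpNorm (fderiv ℝ V) m (μ.restrict s))) :=
  have : IsFiniteMeasure (μ.restrict s) := isFiniteMeasure_restrict.2 hs
  tendsto_eLpNorm_of_norm_le hm (fun _ => (measurable_fderiv ℝ _).aestronglyMeasurable)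
    (norm_fderiv_mollify_le hV) (ae_restrict_of_ae (ae_tendsto_fderiv_mollify hV))

end Mollification

section Sobolev

/-- The exponents for which `W^{1,m}` embeds into `L^s` on bounded domains of a space of
dimension `d`, except `s = ∞`. -/
structure IsSobolevPair (d : ℕ) (m s : ℝ≥0) : Prop where
  one_le : 1 ≤ m
  pos : 0 < s
  inv_sub_inv_le : (m : ℝ) < d → (m : ℝ)⁻¹ - (d : ℝ)⁻¹ ≤ (s : ℝ)⁻¹

lemma IsSobolevPair.exists_le_and_lt {d : ℕ} {m s : ℝ≥0} (h : IsSobolevPair d m s) (hd : 1 < d) :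
    ∃ m' ≤ m, (m' : ℝ) < d ∧ IsSobolevPair d m' s := by
  rcases lt_or_ge (m : ℝ) d with hmd | hdm
  · exact ⟨m, le_rfl, hmd, h⟩
  have hs : (0 : ℝ) < s := h.pos
  have hd1 : (1 : ℝ) < d := by exact_mod_cast hd
  have hd0 : (0 : ℝ) < d := one_pos.trans hd1
  set e : ℝ := ((s : ℝ)⁻¹ + (d : ℝ)⁻¹)⁻¹
  have he0 : 0 < e := by positivity
  have hed : e < d := inv_lt_of_inv_lt₀ hd0 (lt_add_of_pos_left _ (inv_pos.2 hs))
  have hcoe : ((max 1 e.toNNReal : ℝ≥0) : ℝ) = max 1 e := by simp [he0.le]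
  refine ⟨max 1 e.toNNReal, ?_, ?_, le_max_left _ _, h.pos, fun _ => ?_⟩
  · rw [← NNReal.coe_le_coe, hcoe]
    exact (max_lt hd1 hed).le.trans hdm
  · rw [hcoe]
    exact max_lt hd1 hed
  · rw [hcoe, sub_le_iff_le_add, inv_le_comm₀ (by positivity) (by positivity)]
    exact le_max_right _ _

lemma eLpNorm_le_rpow_measure_mul_eLpNorm_of_support_subset {α G : Type*} [MeasurableSpace α]
    [NormedAddCommGroup G] {ν : Measure α} {f : α → G} (hf : AEStronglyMeasurable f ν) {s : Set α}
    (hs : Function.support f ⊆ s) {p q : ℝ≥0∞} (hpq : p ≤ q) :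
    eLpNorm f p ν ≤ ν s ^ (1 / p.toReal - 1 / q.toReal) * eLpNorm f q ν := by
  rw [← eLpNorm_restrict_eq_of_support_subset (p := p) hs,
    ← eLpNorm_restrict_eq_of_support_subset (p := q) hs, mul_comm, ← Measure.restrict_apply_univ s]
  exact eLpNorm_le_eLpNorm_mul_rpow_measure_univ hpq hf.restrict

variable {E F : Type*} [NormedAddCommGroup E] [InnerProductSpace ℝ E] [FiniteDimensional ℝ E]
  [MeasurableSpace E] [BorelSpace E] [NormedAddCommGroup F] [NormedSpace ℝ F]
  {m m' t : ℝ≥0} {s : Set E}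

lemma enorm_le_lintegral_fderiv_of_finrank_eq_one (hE : Module.finrank ℝ E = 1) {w : E → F}
    (hw : ContDiff ℝ 1 w) (hwc : HasCompactSupport w) (x : E) :
    ‖w x‖ₑ ≤ ∫⁻ y, ‖fderiv ℝ w y‖ₑ := by
  let e : ℝ ≃ₗᵢ[ℝ] E := (stdOrthonormalBasis ℝ ℝ).equiv (stdOrthonormalBasis ℝ E)
    (finCongr (by rw [hE, Module.finrank_self]))
  have hderiv : ∀ y, ‖deriv (w ∘ e) y‖ₑ ≤ ‖fderiv ℝ w (e y)‖ₑ := fun y => by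
    have : HasDerivAt (w ∘ e) (fderiv ℝ w (e y) (e 1)) y :=
      ((hw.differentiable one_ne_zero (e y)).hasFDerivAt.comp y
        e.toContinuousLinearEquiv.hasFDerivAt).hasDerivAt
    rw [this.deriv]
    exact (ContinuousLinearMap.le_opENorm _ _).trans (by simp)
  calc ‖w x‖ₑ = ‖(w ∘ e) (e.symm x)‖ₑ := by simp
    _ ≤ ∫⁻ y in Iic (e.symm x), ‖deriv (w ∘ e) y‖ₑ :=
        (hwc.comp_homeomorph e.toHomeomorph).enorm_le_lintegral_Ici_deriv
          (hw.comp e.contDiff) _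
    _ ≤ ∫⁻ y, ‖deriv (w ∘ e) y‖ₑ := setLIntegral_le_lintegral _ _
    _ ≤ ∫⁻ y, ‖fderiv ℝ w y‖ₑ := by
        rw [← e.measurePreserving.lintegral_comp_emb e.toMeasurableEquiv.measurableEmbedding]
        exact lintegral_mono hderiv

lemma exists_eLpNorm_le_fderiv_of_finrank_eq_one (hE : Module.finrank ℝ E = 1) (ht : 0 < t)
    (hs : Bornology.IsBounded s) :
    ∃ C : ℝ≥0, ∀ w : E → F, ContDiff ℝ 1 w → Function.support w ⊆ s →
      eLpNorm w t volume ≤ C * eLpNorm (fderiv ℝ w) 1 volume := by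
  have hfin : volume s ^ (t : ℝ)⁻¹ ≠ ⊤ :=
    ENNReal.rpow_ne_top_of_nonneg (by positivity) hs.measure_lt_top.ne
  refine ⟨(volume s ^ (t : ℝ)⁻¹).toNNReal, fun w hw hws => ?_⟩
  rw [ENNReal.coe_toNNReal hfin, ← eLpNorm_restrict_eq_of_support_subset hws,
    eLpNorm_one_eq_lintegral_enorm]
  have hwc : HasCompactSupport w := .intro hs.isCompact_closure fun x hx =>
    Function.notMem_support.1 fun h => hx (subset_closure (hws h))
  simpa [mul_comm] using eLpNorm_le_of_ae_enorm_bound (p := t) (μ := volume.restrict s)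
    (.of_forall (enorm_le_lintegral_fderiv_of_finrank_eq_one hE hw hwc))

variable [FiniteDimensional ℝ F]

lemma exists_eLpNorm_fderiv_le_of_exponent_le (hm' : m' ≠ 0) (h : m' ≤ m)
    (hs : Bornology.IsBounded s) :
    ∃ C : ℝ≥0, ∀ w : E → F, Function.support w ⊆ s →
      eLpNorm (fderiv ℝ w) m' volume ≤ C * eLpNorm (fderiv ℝ w) m volume := by
  have hfin : volume (closure s) ^ (1 / (m' : ℝ) - 1 / (m : ℝ)) ≠ ⊤ :=
    ENNReal.rpow_ne_top_of_nonneg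
      (sub_nonneg.2 (one_div_le_one_div_of_le (by positivity) (by exact_mod_cast h)))
      hs.closure.measure_lt_top.ne
  refine ⟨(volume (closure s) ^ (1 / (m' : ℝ) - 1 / (m : ℝ))).toNNReal, fun w hw => ?_⟩
  rw [ENNReal.coe_toNNReal hfin]
  exact eLpNorm_le_rpow_measure_mul_eLpNorm_of_support_subset
    (measurable_fderiv ℝ w).aestronglyMeasurable
    ((support_fderiv_subset ℝ).trans (closure_mono hw)) (ENNReal.coe_le_coe.2 h)

variable [Nontrivial E]

lemma exists_eLpNorm_le_fderiv_of_contDiff (h : IsSobolevPair (Module.finrank ℝ E) m t)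
    (hs : Bornology.IsBounded s) :
    ∃ C : ℝ≥0, ∀ w : E → F, ContDiff ℝ 1 w → Function.support w ⊆ s →
      eLpNorm w t volume ≤ C * eLpNorm (fderiv ℝ w) m volume := by
  obtain ⟨m', hm'0, hm'm, C, hC⟩ : ∃ m' : ℝ≥0, m' ≠ 0 ∧ m' ≤ m ∧ ∃ C : ℝ≥0, ∀ w : E → F,
      ContDiff ℝ 1 w → Function.support w ⊆ s →
        eLpNorm w t volume ≤ C * eLpNorm (fderiv ℝ w) m' volume := by
    rcases eq_or_lt_of_le (Nat.succ_le_of_lt (Module.finrank_pos (R := ℝ) (M := E))) with hE | hE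
    · exact ⟨1, one_ne_zero, h.one_le, exists_eLpNorm_le_fderiv_of_finrank_eq_one hE.symm h.pos hs⟩
    · obtain ⟨m', hm'm, hm'd, h'⟩ := h.exists_le_and_lt hE
      exact ⟨m', (one_pos.trans_le h'.one_le).ne', hm'm, _, fun w hw hws =>
        eLpNorm_le_eLpNorm_fderiv_of_le volume hw hws h'.one_le (by exact_mod_cast hm'd)
          (by exact_mod_cast h'.inv_sub_inv_le hm'd) hs⟩
  obtain ⟨C', hC'⟩ := exists_eLpNorm_fderiv_le_of_exponent_le (F := F) hm'0 hm'm hs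
  refine ⟨C * C', fun w hw hws => (hC w hw hws).trans ?_⟩
  rw [ENNReal.coe_mul, mul_assoc]
  gcongr
  exact hC' w hws

lemma exists_eLpNorm_le_fderiv_of_lipschitzWith (h : IsSobolevPair (Module.finrank ℝ E) m t)
    (hs : Bornology.IsBounded s) :
    ∃ C : ℝ≥0, ∀ (w : E → F) (K : ℝ≥0), LipschitzWith K w → Function.support w ⊆ s →
      eLpNorm w t volume ≤ C * eLpNorm (fderiv ℝ w) m volume := by
  have hs' : Bornology.IsBounded (cthickening 1 s) := hs.cthickening
  obtain ⟨C, hC⟩ := exists_eLpNorm_le_fderiv_of_contDiff (F := F) h hs'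
  refine ⟨C, fun w K hw hws => ?_⟩
  have hW : ∀ k, Function.support (mollify volume w k) ⊆ cthickening 1 s := fun k =>
    (support_mollify_subset w k).trans (cthickening_subset_of_subset 1 hws)
  have hDW : ∀ k, Function.support (fderiv ℝ (mollify volume w k)) ⊆ cthickening 1 s := fun k =>
    (support_fderiv_subset ℝ).trans (closure_minimal (hW k) isClosed_cthickening)
  have hW1 : ∀ k, ContDiff ℝ 1 (mollify volume w k) :=
    contDiff_mollify hw.continuous.locallyIntegrable
  have hlim := tendsto_eLpNorm_fderiv_mollify hw (one_pos.trans_le h.one_le).ne'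
    (μ := volume) hs'.measure_lt_top.ne
  calc eLpNorm w t volume ≤ atTop.liminf fun k => eLpNorm (mollify volume w k) t volume :=
        Lp.eLpNorm_lim_le_liminf_eLpNorm (fun k => (hW1 k).continuous.aestronglyMeasurable) _
          (.of_forall (tendsto_mollify hw.continuous))
    _ ≤ atTop.liminf fun k => C * eLpNorm (fderiv ℝ (mollify volume w k)) m
          (volume.restrict (cthickening 1 s)) := by
        refine liminf_le_liminf (.of_forall fun k => ?_)
        rw [eLpNorm_restrict_eq_of_support_subset (f := fderiv ℝ (mollify volume w k)) (hDW k)]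
        exact hC _ (hW1 k) (hW k)
    _ = C * eLpNorm (fderiv ℝ w) m (volume.restrict (cthickening 1 s)) :=
        (ENNReal.Tendsto.const_mul hlim (Or.inr ENNReal.coe_ne_top)).liminf_eq
    _ ≤ C * eLpNorm (fderiv ℝ w) m volume := by
        gcongr
        exact Measure.restrict_le_self

end Sobolev

section Poincare

lemma rpow_lintegral_le_lintegral_rpow {α : Type*} [MeasurableSpace α] {μ : Measure α}
    [IsProbabilityMeasure μ] {m : ℝ≥0} (hm : 1 ≤ m) {h : α → ℝ≥0∞} (hh : AEMeasurable h μ) :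
    (∫⁻ t, h t ∂μ) ^ (m : ℝ) ≤ ∫⁻ t, h t ^ (m : ℝ) ∂μ := by
  have hm0 : m ≠ 0 := (one_pos.trans_le hm).ne'
  have := eLpNorm_le_eLpNorm_of_exponent_le (ENNReal.one_le_coe_iff.2 hm) hh.aestronglyMeasurable
  rw [eLpNorm_one_eq_lintegral_enorm, eLpNorm_nnreal_eq_lintegral hm0, one_div] at this
  exact (ENNReal.le_rpow_inv_iff (by positivity)).1 this

lemma enorm_sub_average_rpow_le_laverage {α F : Type*} [MeasurableSpace α] {μ : Measure α}
    [IsFiniteMeasure μ] [NeZero μ] [NormedAddCommGroup F] [NormedSpace ℝ F] [CompleteSpace F]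
    {m : ℝ≥0} (hm : 1 ≤ m) {f : α → F} (hf : Integrable f μ) (c : F) :
    ‖c - ⨍ y, f y ∂μ‖ₑ ^ (m : ℝ) ≤ ⨍⁻ y, ‖c - f y‖ₑ ^ (m : ℝ) ∂μ := by
  have hc : c - ⨍ y, f y ∂μ = ⨍ y, (c - f y) ∂μ := by
    rw [average, average, integral_sub (integrable_const _) hf.to_average, integral_const,
      probReal_univ, one_smul]
  rw [hc]
  calc ‖⨍ y, (c - f y) ∂μ‖ₑ ^ (m : ℝ) ≤ (⨍⁻ y, ‖c - f y‖ₑ ∂μ) ^ (m : ℝ) := by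
        gcongr
        exact enorm_integral_le_lintegral_enorm _
    _ ≤ ⨍⁻ y, ‖c - f y‖ₑ ^ (m : ℝ) ∂μ :=
        rpow_lintegral_le_lintegral_rpow hm
          (aestronglyMeasurable_const.sub hf.to_average.aestronglyMeasurable).enorm

variable {E F : Type*} [NormedAddCommGroup E] [NormedSpace ℝ E] [NormedAddCommGroup F]
  [NormedSpace ℝ F] {m : ℝ≥0} {V : E → F} {s : Set E}

lemma enorm_sub_rpow_le_lintegral_lineMap (hm : 1 ≤ m) (hV : ContDiff ℝ 1 V) (x y : E) :
    ‖V x - V y‖ₑ ^ (m : ℝ) ≤ ‖y - x‖ₑ ^ (m : ℝ) *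
      ∫⁻ t in Icc (0 : ℝ) 1, ‖fderiv ℝ V (AffineMap.lineMap x y t)‖ₑ ^ (m : ℝ) := by
  have : IsProbabilityMeasure (volume.restrict (Icc (0 : ℝ) 1)) := ⟨by simp⟩
  have hpath : ContDiff ℝ 1 (AffineMap.lineMap (k := ℝ) x y) := by
    rw [AffineMap.coe_lineMap]
    simp only [vsub_eq_sub, vadd_eq_add]
    fun_prop
  have hDV : Continuous fun t : ℝ => fderiv ℝ V (AffineMap.lineMap x y t) :=
    (hV.continuous_fderiv one_ne_zero).comp hpath.continuous
  have hderiv : ∀ t : ℝ, ‖deriv (V ∘ AffineMap.lineMap x y) t‖ₑ ≤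
      ‖y - x‖ₑ * ‖fderiv ℝ V (AffineMap.lineMap x y t)‖ₑ := fun t => by
    rw [((hV.differentiable one_ne_zero _).hasFDerivAt.comp_hasDerivAt t
      AffineMap.hasDerivAt_lineMap).deriv, mul_comm]
    exact ContinuousLinearMap.le_opENorm _ _
  have hFTC : ‖V x - V y‖ₑ ≤
      ‖y - x‖ₑ * ∫⁻ t in Icc (0 : ℝ) 1, ‖fderiv ℝ V (AffineMap.lineMap x y t)‖ₑ := by
    have := enorm_sub_le_lintegral_deriv_of_contDiffOn_Icc (hV.comp hpath).contDiffOn zero_le_one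
    simp only [Function.comp_apply, AffineMap.lineMap_apply_one, AffineMap.lineMap_apply_zero]
      at this
    rw [← enorm_neg, neg_sub, ← lintegral_const_mul' _ _ enorm_ne_top]
    exact this.trans (lintegral_mono hderiv)
  calc ‖V x - V y‖ₑ ^ (m : ℝ)
      ≤ (‖y - x‖ₑ * ∫⁻ t in Icc (0 : ℝ) 1, ‖fderiv ℝ V (AffineMap.lineMap x y t)‖ₑ) ^ (m : ℝ) := by
        gcongr
    _ = ‖y - x‖ₑ ^ (m : ℝ) *
        (∫⁻ t in Icc (0 : ℝ) 1, ‖fderiv ℝ V (AffineMap.lineMap x y t)‖ₑ) ^ (m : ℝ) :=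
        ENNReal.mul_rpow_of_nonneg _ _ m.coe_nonneg
    _ ≤ _ := by
        gcongr
        exact rpow_lintegral_le_lintegral_rpow hm hDV.enorm.aemeasurable

variable [FiniteDimensional ℝ E] [MeasurableSpace E] [BorelSpace E] {μ : Measure E}
  [μ.IsAddHaarMeasure]

lemma lintegral_comp_add_smul (G : E → ℝ≥0∞) (b : E) {c : ℝ} (hc : c ≠ 0) :
    ∫⁻ y, G (b + c • y) ∂μ = ENNReal.ofReal |(c ^ Module.finrank ℝ E)⁻¹| * ∫⁻ y, G y ∂μ := by
  have hmap := lintegral_map_equiv (μ := μ) (fun y => G (b + y))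
    (Homeomorph.smulOfNeZero c hc).toMeasurableEquiv
  rw [show ⇑(Homeomorph.smulOfNeZero c hc).toMeasurableEquiv = (c • · : E → E) from rfl,
    Measure.map_addHaar_smul μ hc, lintegral_smul_measure, lintegral_add_left_eq_self,
    smul_eq_mul] at hmap
  exact hmap.symm

lemma setLIntegral_comp_lineMap_le (G : E → ℝ≥0∞) (s : Set E) (x : E) {t : ℝ} (ht : 1 / 2 ≤ t) :
    ∫⁻ y in s, G (AffineMap.lineMap x y t) ∂μ ≤ 2 ^ Module.finrank ℝ E * ∫⁻ y, G y ∂μ := by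
  have ht0 : 0 < t := by linarith
  simp only [AffineMap.lineMap_apply_module]
  refine (setLIntegral_le_lintegral _ _).trans
    ((lintegral_comp_add_smul G ((1 - t) • x) ht0.ne').trans_le ?_)
  gcongr
  rw [abs_of_pos (by positivity), ← inv_pow, ENNReal.ofReal_pow (by positivity)]
  gcongr
  rw [ENNReal.ofReal_le_ofNat]
  exact (inv_anti₀ one_half_pos ht).trans_eq (by norm_num)

lemma lintegral_lintegral_lineMap_le [SFinite (μ.restrict s)] {G : E → ℝ≥0∞} (hG : Measurable G)
    (t : ℝ) :
    ∫⁻ x in s, ∫⁻ y in s, G (AffineMap.lineMap x y t) ∂μ ∂μ ≤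
      2 ^ Module.finrank ℝ E * (∫⁻ z, G z ∂μ) * μ s := by
  wlog ht : 1 / 2 ≤ t generalizing t
  · have hswap : Measurable fun z : E × E => G (AffineMap.lineMap z.1 z.2 t) := by
      simp only [AffineMap.lineMap_apply_module]
      exact hG.comp (by fun_prop)
    rw [lintegral_lintegral_swap hswap.aemeasurable]
    simpa only [AffineMap.lineMap_apply_one_sub] using this (1 - t) (by linarith)
  · exact (lintegral_mono fun x => setLIntegral_comp_lineMap_le G s x ht).trans_eq
      (setLIntegral_const s _)

lemma lintegral_lintegral_lintegral_lineMap_le (s : Set E) {G : E → ℝ≥0∞} (hG : Measurable G) :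
    ∫⁻ x in s, ∫⁻ y in s, (∫⁻ t in Icc (0 : ℝ) 1, G (AffineMap.lineMap x y t)) ∂μ ∂μ ≤
      2 ^ Module.finrank ℝ E * (∫⁻ z, G z ∂μ) * μ s := by
  have hmeas : Measurable fun z : (E × E) × ℝ => G (AffineMap.lineMap z.1.1 z.1.2 z.2) := by
    simp only [AffineMap.lineMap_apply_module]
    exact hG.comp (by fun_prop)
  calc ∫⁻ x in s, ∫⁻ y in s, (∫⁻ t in Icc (0 : ℝ) 1, G (AffineMap.lineMap x y t)) ∂μ ∂μ
      = ∫⁻ x in s, (∫⁻ t in Icc (0 : ℝ) 1, ∫⁻ y in s, G (AffineMap.lineMap x y t) ∂μ) ∂μ :=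
        lintegral_congr fun x => lintegral_lintegral_swap
          (hmeas.comp (f := fun z : E × ℝ => ((x, z.1), z.2)) (by fun_prop)).aemeasurable
    _ = ∫⁻ t in Icc (0 : ℝ) 1, ∫⁻ x in s, ∫⁻ y in s, G (AffineMap.lineMap x y t) ∂μ ∂μ :=
        lintegral_lintegral_swap
          (hmeas.comp (f := fun z : (E × ℝ) × E => ((z.1.1, z.2), z.1.2))
            (by fun_prop)).lintegral_prod_right'.aemeasurable
    _ ≤ ∫⁻ _ in Icc (0 : ℝ) 1, 2 ^ Module.finrank ℝ E * (∫⁻ z, G z ∂μ) * μ s :=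
        lintegral_mono fun t => lintegral_lintegral_lineMap_le hG t
    _ = _ := by simp

lemma lintegral_lintegral_enorm_sub_rpow_le (hm : 1 ≤ m) (hV : ContDiff ℝ 1 V) (hs : Convex ℝ s)
    (hsm : MeasurableSet s) (hsb : Bornology.IsBounded s) :
    ∫⁻ x in s, ∫⁻ y in s, ‖V x - V y‖ₑ ^ (m : ℝ) ∂μ ∂μ ≤
      ediam s ^ (m : ℝ) * (2 ^ Module.finrank ℝ E *
        (∫⁻ z in s, ‖fderiv ℝ V z‖ₑ ^ (m : ℝ) ∂μ) * μ s) := by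
  set G : E → ℝ≥0∞ := s.indicator fun z => ‖fderiv ℝ V z‖ₑ ^ (m : ℝ)
  have hGm : Measurable G :=
    ((hV.continuous_fderiv one_ne_zero).enorm.measurable.pow_const _).indicator hsm
  have hd : ediam s ^ (m : ℝ) ≠ ⊤ :=
    ENNReal.rpow_ne_top_of_nonneg m.coe_nonneg hsb.ediam_ne_top
  have hpair : ∀ x ∈ s, ∀ y ∈ s, ‖V x - V y‖ₑ ^ (m : ℝ) ≤
      ediam s ^ (m : ℝ) * ∫⁻ t in Icc (0 : ℝ) 1, G (AffineMap.lineMap x y t) := by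
    intro x hx y hy
    refine (enorm_sub_rpow_le_lintegral_lineMap hm hV x y).trans ?_
    gcongr ?_ ^ (m : ℝ) * ?_
    · rw [← edist_eq_enorm_sub]
      exact edist_le_ediam_of_mem hy hx
    · exact setLIntegral_mono' measurableSet_Icc fun t ht =>
        (indicator_of_mem (hs.lineMap_mem hx hy ht)
          fun z => ‖fderiv ℝ V z‖ₑ ^ (m : ℝ)).ge
  have hsum := lintegral_lintegral_lintegral_lineMap_le (μ := μ) s hGm
  rw [lintegral_indicator hsm] at hsum
  refine le_trans ?_ (mul_le_mul_right hsum _)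
  rw [← lintegral_const_mul' _ _ hd]
  refine setLIntegral_mono' hsm fun x hx => ?_
  rw [← lintegral_const_mul' _ _ hd]
  exact setLIntegral_mono' hsm (hpair x hx)

lemma lintegral_enorm_sub_average_rpow_le [CompleteSpace F] (hm : 1 ≤ m) (hV : ContDiff ℝ 1 V)
    (hs : Convex ℝ s) (hsm : MeasurableSet s) (hsb : Bornology.IsBounded s) :
    ∫⁻ x in s, ‖V x - ⨍ y in s, V y ∂μ‖ₑ ^ (m : ℝ) ∂μ ≤
      ediam s ^ (m : ℝ) * 2 ^ Module.finrank ℝ E * ∫⁻ z in s, ‖fderiv ℝ V z‖ₑ ^ (m : ℝ) ∂μ := by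
  rcases eq_or_ne (μ s) 0 with h0 | h0
  · simp [Measure.restrict_eq_zero.2 h0]
  have : Fact (μ s < ⊤) := ⟨hsb.measure_lt_top⟩
  have : NeZero (μ.restrict s) := ⟨by rwa [Ne, Measure.restrict_eq_zero]⟩
  have hVint : IntegrableOn V s μ :=
    (hV.continuous.locallyIntegrable.integrableOn_isCompact hsb.isCompact_closure).mono_set
      subset_closure
  calc ∫⁻ x in s, ‖V x - ⨍ y in s, V y ∂μ‖ₑ ^ (m : ℝ) ∂μ
      ≤ ∫⁻ x in s, (μ s)⁻¹ * ∫⁻ y in s, ‖V x - V y‖ₑ ^ (m : ℝ) ∂μ ∂μ := by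
        refine lintegral_mono fun x => ?_
        rw [mul_comm, ← div_eq_mul_inv, ← setLAverage_eq]
        exact enorm_sub_average_rpow_le_laverage hm hVint (V x)
    _ ≤ (μ s)⁻¹ * (ediam s ^ (m : ℝ) * (2 ^ Module.finrank ℝ E *
          (∫⁻ z in s, ‖fderiv ℝ V z‖ₑ ^ (m : ℝ) ∂μ) * μ s)) := by
        rw [lintegral_const_mul' _ _ (ENNReal.inv_ne_top.2 h0)]
        gcongr
        exact lintegral_lintegral_enorm_sub_rpow_le hm hV hs hsm hsb
    _ = ediam s ^ (m : ℝ) * 2 ^ Module.finrank ℝ E *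
          (∫⁻ z in s, ‖fderiv ℝ V z‖ₑ ^ (m : ℝ) ∂μ) * ((μ s)⁻¹ * μ s) := by ring
    _ = _ := by rw [ENNReal.inv_mul_cancel h0 hsb.measure_lt_top.ne, mul_one]

lemma exists_eLpNorm_sub_average_le_of_contDiff [CompleteSpace F] (hm : 1 ≤ m)
    (hs : Convex ℝ s) (hsm : MeasurableSet s) (hsb : Bornology.IsBounded s) :
    ∃ C : ℝ≥0, ∀ V : E → F, ContDiff ℝ 1 V →
      eLpNorm (fun x => V x - ⨍ y in s, V y ∂μ) m (μ.restrict s) ≤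
        C * eLpNorm (fderiv ℝ V) m (μ.restrict s) := by
  have hm0 : m ≠ 0 := (one_pos.trans_le hm).ne'
  have hfin : (ediam s ^ (m : ℝ) * 2 ^ Module.finrank ℝ E) ^ (1 / (m : ℝ)) ≠ ⊤ :=
    ENNReal.rpow_ne_top_of_nonneg (by positivity) (ENNReal.mul_ne_top
      (ENNReal.rpow_ne_top_of_nonneg m.coe_nonneg hsb.ediam_ne_top)
      (ENNReal.pow_ne_top ENNReal.ofNat_ne_top))
  refine ⟨((ediam s ^ (m : ℝ) * 2 ^ Module.finrank ℝ E) ^ (1 / (m : ℝ))).toNNReal, fun V hV => ?_⟩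
  rw [ENNReal.coe_toNNReal hfin, eLpNorm_nnreal_eq_lintegral hm0, eLpNorm_nnreal_eq_lintegral hm0,
    ← ENNReal.mul_rpow_of_nonneg _ _ (by positivity)]
  gcongr
  exact lintegral_enorm_sub_average_rpow_le hm hV hs hsm hsb

lemma exists_eLpNorm_sub_average_le_of_lipschitzWith [FiniteDimensional ℝ F] (hm : 1 ≤ m)
    (hs : Convex ℝ s) (hsm : MeasurableSet s) (hsb : Bornology.IsBounded s) :
    ∃ C : ℝ≥0, ∀ (V : E → F) (K : ℝ≥0), LipschitzWith K V →
      eLpNorm (fun x => V x - ⨍ y in s, V y ∂μ) m (μ.restrict s) ≤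
        C * eLpNorm (fderiv ℝ V) m (μ.restrict s) := by
  have : CompleteSpace F := FiniteDimensional.complete ℝ F
  obtain ⟨C, hC⟩ := exists_eLpNorm_sub_average_le_of_contDiff (F := F) (μ := μ) hm hs hsm hsb
  refine ⟨C, fun V K hV => ?_⟩
  have hW : ∀ k, ContDiff ℝ 1 (mollify μ V k) :=
    contDiff_mollify hV.continuous.locallyIntegrable
  have hlim := tendsto_eLpNorm_fderiv_mollify (μ := μ) hV (one_pos.trans_le hm).ne'
    hsb.measure_lt_top.ne
  calc eLpNorm (fun x => V x - ⨍ y in s, V y ∂μ) m (μ.restrict s)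
      ≤ atTop.liminf fun k => eLpNorm (fun x => mollify μ V k x - ⨍ y in s, mollify μ V k y ∂μ) m
          (μ.restrict s) :=
        Lp.eLpNorm_lim_le_liminf_eLpNorm
          (fun k => ((hW k).continuous.sub continuous_const).aestronglyMeasurable) _
          (.of_forall fun x =>
            (tendsto_mollify hV.continuous x).sub (tendsto_setAverage_mollify hV hsb))
    _ ≤ atTop.liminf fun k => C * eLpNorm (fderiv ℝ (mollify μ V k)) m (μ.restrict s) :=
        liminf_le_liminf (.of_forall fun k => hC _ (hW k))
    _ = C * eLpNorm (fderiv ℝ V) m (μ.restrict s) :=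
        (ENNReal.Tendsto.const_mul hlim (Or.inr ENNReal.coe_ne_top)).liminf_eq

end Poincare

section BallExtension

open EuclideanGeometry

lemma lipschitzOnWith_smul_of_norm_le {α R G : Type*} [PseudoMetricSpace α] [SeminormedRing R]
    [SeminormedAddCommGroup G] [Module R G] [IsBoundedSMul R G] {f : α → R} {g : α → G} {s : Set α}
    {A B Kf Kg : ℝ≥0} (hf : LipschitzOnWith Kf f s) (hg : LipschitzOnWith Kg g s)
    (hA : ∀ x ∈ s, ‖f x‖ ≤ A) (hB : ∀ x ∈ s, ‖g x‖ ≤ B) :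
    LipschitzOnWith (A * Kg + B * Kf) (fun x => f x • g x) s := by
  refine LipschitzOnWith.of_dist_le_mul fun x hx y hy => ?_
  calc dist (f x • g x) (f y • g y)
      ≤ dist (f x • g x) (f x • g y) + dist (f x • g y) (f y • g y) := dist_triangle _ _ _
    _ ≤ ‖f x‖ * dist (g x) (g y) + dist (f x) (f y) * ‖g y‖ := by
        gcongr
        · rw [dist_eq_norm, ← smul_sub, dist_eq_norm]
          exact norm_smul_le _ _
        · rw [dist_eq_norm, ← sub_smul, dist_eq_norm]
          exact norm_smul_le _ _
    _ ≤ A * (Kg * dist x y) + Kf * dist x y * B := by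
        gcongr
        exacts [hA x hx, hg.dist_le_mul x hx y hy, hf.dist_le_mul x hx y hy, hB y hy]
    _ = (A * Kg + B * Kf : ℝ≥0) * dist x y := by push_cast; ring

lemma norm_fderiv_smul_le {E F : Type*} [NormedAddCommGroup E] [NormedSpace ℝ E]
    [NormedAddCommGroup F] [NormedSpace ℝ F] {f : E → ℝ} {g : E → F} {x : E}
    (hf : DifferentiableAt ℝ f x) (hg : DifferentiableAt ℝ g x) :
    ‖fderiv ℝ (fun y => f y • g y) x‖ ≤ ‖f x‖ * ‖fderiv ℝ g x‖ + ‖fderiv ℝ f x‖ * ‖g x‖ := by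
  rw [fderiv_fun_smul hf hg]
  exact (norm_add_le _ _).trans_eq (by rw [norm_smul, norm_smulRight_apply])

lemma eLpNorm_norm_add_mul_norm_le {α G G' : Type*} [MeasurableSpace α] [NormedAddCommGroup G]
    [NormedAddCommGroup G'] {ν : Measure α} {f : α → G} {g : α → G'}
    (hf : AEStronglyMeasurable f ν) (hg : AEStronglyMeasurable g ν) (M : ℝ≥0) {p : ℝ≥0∞}
    (hp : 1 ≤ p) :
    eLpNorm (fun x => ‖f x‖ + M * ‖g x‖) p ν ≤ eLpNorm f p ν + M * eLpNorm g p ν := by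
  have hmul : eLpNorm (fun x => (M : ℝ) * ‖g x‖) p ν = M * eLpNorm g p ν :=
    (eLpNorm_const_smul (M : ℝ) (fun x => ‖g x‖) p ν).trans (by simp)
  rw [← eLpNorm_norm f, ← hmul]
  exact eLpNorm_add_le hf.norm (hg.norm.const_mul _) hp

lemma eLpNorm_le_eLpNorm_restrict_add_of_ae_mem_union {α G : Type*} [MeasurableSpace α]
    [NormedAddCommGroup G] {ν : Measure α} {f : α → G} (hf : AEStronglyMeasurable f ν) {s t : Set α}
    (hs : MeasurableSet s) (ht : MeasurableSet t) (hst : ∀ᵐ x ∂ν, f x ≠ 0 → x ∈ s ∪ t) {p : ℝ≥0∞}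
    (hp : 1 ≤ p) :
    eLpNorm f p ν ≤ eLpNorm f p (ν.restrict s) + eLpNorm f p (ν.restrict t) := by
  rw [← eLpNorm_indicator_eq_eLpNorm_restrict hs, ← eLpNorm_indicator_eq_eLpNorm_restrict ht,
    ← eLpNorm_norm (s.indicator f), ← eLpNorm_norm (t.indicator f)]
  refine (eLpNorm_mono_ae_real ?_).trans
    (eLpNorm_add_le (hf.indicator hs).norm (hf.indicator ht).norm hp)
  filter_upwards [hst] with x hx
  by_cases hxs : x ∈ s
  · simp [hxs]
  by_cases hxt : x ∈ t
  · simp [hxt]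
  · rw [not_imp_comm.1 hx (by simp [hxs, hxt]), norm_zero]
    exact add_nonneg (norm_nonneg _) (norm_nonneg _)

variable {E F : Type*} [NormedAddCommGroup E] [InnerProductSpace ℝ E]

lemma norm_inversion_zero_one (x : E) : ‖inversion 0 1 x‖ = ‖x‖⁻¹ := by
  simpa using dist_inversion_center (0 : E) x 1

lemma norm_sub_inversion_le {x y : E} (hx : ‖x‖ ≤ 1) (hy : 1 < ‖y‖) :
    ‖x - inversion 0 1 y‖ ≤ ‖x - y‖ := by
  have hinv : inversion 0 1 y = (1 / ‖y‖) ^ 2 • y := by simp [inversion]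
  have hy0 : 0 < ‖y‖ := one_pos.trans hy
  have hinner : inner ℝ x y ≤ ‖y‖ :=
    (real_inner_le_norm x y).trans (mul_le_of_le_one_left (norm_nonneg _) hx)
  have hle : (1 / ‖y‖) ^ 2 ≤ 1 := pow_le_one₀ (by positivity) ((div_le_one hy0).2 hy.le)
  have hmul : (1 / ‖y‖) ^ 2 * ‖y‖ ^ 2 = 1 := by field_simp
  have hsq : 0 ≤ ‖y‖ ^ 2 + 1 - 2 * inner ℝ x y := by nlinarith [sq_nonneg (‖y‖ - 1)]
  refine le_of_sq_le_sq ?_ (norm_nonneg _)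
  rw [norm_sub_sq_real, norm_sub_sq_real, norm_inversion_zero_one, hinv, real_inner_smul_right,
    ← one_div]
  linarith [mul_nonneg (sub_nonneg.2 hle) hsq]

/-- The retraction of `E` onto its closed unit ball which reflects the exterior by the inversion in
the unit sphere. -/
def ballReflection (x : E) : E :=
  if ‖x‖ ≤ 1 then x else inversion 0 1 x

lemma ballReflection_of_norm_le_one {x : E} (hx : ‖x‖ ≤ 1) : ballReflection x = x :=
  if_pos hx

lemma ballReflection_of_one_lt_norm {x : E} (hx : 1 < ‖x‖) :
    ballReflection x = inversion 0 1 x :=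
  if_neg hx.not_ge

lemma norm_ballReflection_le_one (x : E) : ‖ballReflection x‖ ≤ 1 := by
  rcases le_or_gt ‖x‖ 1 with hx | hx
  · rwa [ballReflection_of_norm_le_one hx]
  · rw [ballReflection_of_one_lt_norm hx, norm_inversion_zero_one]
    exact inv_le_one_of_one_le₀ hx.le

lemma lipschitzWith_ballReflection : LipschitzWith 1 (ballReflection (E := E)) := by
  refine LipschitzWith.of_dist_le_mul fun x y => ?_
  rw [NNReal.coe_one, one_mul]
  rcases le_or_gt ‖x‖ 1 with hx | hx <;> rcases le_or_gt ‖y‖ 1 with hy | hy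
  · rw [ballReflection_of_norm_le_one hx, ballReflection_of_norm_le_one hy]
  · rw [ballReflection_of_norm_le_one hx, ballReflection_of_one_lt_norm hy, dist_eq_norm,
      dist_eq_norm]
    exact norm_sub_inversion_le hx hy
  · rw [ballReflection_of_one_lt_norm hx, ballReflection_of_norm_le_one hy, dist_comm, dist_comm x,
      dist_eq_norm, dist_eq_norm]
    exact norm_sub_inversion_le hy hx
  · rw [ballReflection_of_one_lt_norm hx, ballReflection_of_one_lt_norm hy,
      dist_inversion_inversion (norm_pos_iff.1 (by linarith)) (norm_pos_iff.1 (by linarith)),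
      dist_zero_right, dist_zero_right, one_pow]
    refine mul_le_of_le_one_left dist_nonneg ((div_le_one (by positivity)).2 ?_)
    exact one_le_mul_of_one_le_of_one_le hx.le hy.le

variable (E) in
/-- The smooth cutoff function of the extension operator `ballExtension`. -/
def extensionBump : ContDiffBump (0 : E) := ⟨1, 2, one_pos, one_lt_two⟩

lemma norm_extensionBump_le_one (x : E) : ‖extensionBump E x‖ ≤ 1 := by
  rw [Real.norm_of_nonneg (extensionBump E).nonneg]
  exact (extensionBump E).le_one

lemma exists_lipschitzWith_extensionBump [FiniteDimensional ℝ E] :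
    ∃ M, LipschitzWith M (extensionBump E) :=
  ContDiff.lipschitzWith_of_hasCompactSupport (extensionBump E).hasCompactSupport
    (extensionBump E).contDiff one_ne_zero

variable [NormedAddCommGroup F] [NormedSpace ℝ F] {V : E → F} {K M : ℝ≥0}

/-- The extension of the restriction of `V` to the closed unit ball by reflection in the unit
sphere, cut off outside the ball of radius `2`. -/
def ballExtension (V : E → F) (x : E) : F :=
  extensionBump E x • V (ballReflection x)

lemma eqOn_ballExtension (V : E → F) : EqOn (ballExtension V) V (closedBall 0 1) := by
  intro x hx
  rw [ballExtension, (extensionBump E).one_of_mem_closedBall hx, one_smul,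
    ballReflection_of_norm_le_one (mem_closedBall_zero_iff.1 hx)]

lemma support_ballExtension_subset (V : E → F) :
    Function.support (ballExtension V) ⊆ closedBall 0 2 :=
  (Function.support_smul_subset_left _ _).trans
    ((extensionBump E).support_eq.trans_subset ball_subset_closedBall)

lemma exists_lipschitzWith_ballExtension [FiniteDimensional ℝ E]
    (hV : LipschitzOnWith K V (closedBall 0 1)) : ∃ K', LipschitzWith K' (ballExtension V) := by
  obtain ⟨M, hM⟩ := exists_lipschitzWith_extensionBump (E := E)
  have hmaps : MapsTo ballReflection univ (closedBall (0 : E) 1) := fun x _ =>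
    mem_closedBall_zero_iff.2 (norm_ballReflection_le_one x)
  obtain ⟨B, hB⟩ :=
    (isCompact_closedBall (0 : E) 1).exists_bound_of_continuousOn hV.continuousOn
  refine ⟨_, lipschitzOnWith_univ.1 (lipschitzOnWith_smul_of_norm_le (A := 1) (B := B.toNNReal)
    hM.lipschitzOnWith (hV.comp lipschitzWith_ballReflection.lipschitzOnWith hmaps)
    (fun x _ => norm_extensionBump_le_one x) fun x hx => ?_)⟩
  exact (hB _ (hmaps hx)).trans (Real.le_coe_toNNReal B)

lemma norm_fderiv_comp_inversion_le {x : E} (hx : 1 < ‖x‖)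
    (hV : DifferentiableAt ℝ V (inversion 0 1 x)) :
    ‖fderiv ℝ (fun y => V (inversion 0 1 y)) x‖ ≤ ‖fderiv ℝ V (inversion 0 1 x)‖ := by
  have hx0 : x ≠ 0 := norm_pos_iff.1 (one_pos.trans hx)
  have hcomp := (hV.hasFDerivAt.comp x (hasFDerivAt_inversion (R := 1) hx0)).fderiv
  rw [Function.comp_def] at hcomp
  rw [hcomp]
  refine (opNorm_comp_le _ _).trans (mul_le_of_le_one_right (norm_nonneg _) ?_)
  rw [norm_smul, dist_zero_right, Real.norm_of_nonneg (by positivity)]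
  exact mul_le_one₀ (pow_le_one₀ (by positivity) ((div_le_one (one_pos.trans hx)).2 hx.le))
    (norm_nonneg _) (LinearIsometry.norm_toContinuousLinearMap_le _)

lemma fderiv_ballExtension_of_mem_ball (V : E → F) {x : E} (hx : x ∈ ball (0 : E) 1) :
    fderiv ℝ (ballExtension V) x = fderiv ℝ V x :=
  (((eqOn_ballExtension V).mono ball_subset_closedBall).eventuallyEq_of_mem
    (isOpen_ball.mem_nhds hx)).fderiv_eq

lemma norm_fderiv_ballExtension_le (hM : LipschitzWith M (extensionBump E)) {x : E}
    (hx : 1 < ‖x‖) (hV : DifferentiableAt ℝ V (inversion 0 1 x)) :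
    ‖fderiv ℝ (ballExtension V) x‖ ≤
      ‖fderiv ℝ V (inversion 0 1 x)‖ + M * ‖V (inversion 0 1 x)‖ := by
  have hx0 : x ≠ 0 := norm_pos_iff.1 (one_pos.trans hx)
  have hev : ballExtension V =ᶠ[𝓝 x] fun y => extensionBump E y • V (inversion 0 1 y) := by
    filter_upwards [(isOpen_lt continuous_const continuous_norm).mem_nhds hx] with y hy
    rw [ballExtension, ballReflection_of_one_lt_norm hy]
  have hcomp : DifferentiableAt ℝ (fun y => V (inversion 0 1 y)) x :=
    hV.comp x (hasFDerivAt_inversion hx0).differentiableAt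
  rw [hev.fderiv_eq]
  refine (norm_fderiv_smul_le ((extensionBump E).contDiffAt.differentiableAt one_ne_zero)
    hcomp).trans ?_
  gcongr
  · exact (mul_le_of_le_one_left (norm_nonneg _) (norm_extensionBump_le_one x)).trans
      (norm_fderiv_comp_inversion_le hx hV)
  · exact norm_fderiv_le_of_lipschitz ℝ hM

variable [FiniteDimensional ℝ E]

lemma inv_four_pow_finrank_le_abs_det_fderiv_inversion {x : E} (hx : x ≠ 0) (hx2 : ‖x‖ ≤ 2) :
    (4⁻¹ : ℝ≥0∞) ^ Module.finrank ℝ E ≤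
      ENNReal.ofReal |(fderiv ℝ (inversion (0 : E) 1) x).det| := by
  have hdet : |(fderiv ℝ (inversion (0 : E) 1) x).det| =
      ((1 / ‖x‖) ^ 2) ^ Module.finrank ℝ E := by
    rw [(hasFDerivAt_inversion hx).fderiv, ContinuousLinearMap.det,
      ContinuousLinearMap.toLinearMap_smul, LinearMap.det_smul, dist_zero_right, abs_mul,
      abs_of_nonneg (by positivity)]
    erw [(ℝ ∙ (x - 0))ᗮ.det_reflection]
    simp
  rw [hdet, ENNReal.ofReal_pow (by positivity)]
  gcongr
  rw [← ENNReal.ofReal_ofNat, ← ENNReal.ofReal_inv_of_pos (by norm_num), one_div, inv_pow]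
  have hpos := norm_pos_iff.2 hx
  exact ENNReal.ofReal_le_ofReal (inv_anti₀ (by positivity) (by nlinarith))

variable [MeasurableSpace E] [BorelSpace E]

lemma measurable_inversion_zero_one : Measurable (inversion (0 : E) 1) := by
  unfold inversion
  fun_prop

lemma map_inversion_restrict_le :
    Measure.map (inversion (0 : E) 1) (volume.restrict (closedBall 0 2 \ closedBall 0 1)) ≤
      (4 : ℝ≥0∞) ^ Module.finrank ℝ E • volume.restrict (ball 0 1) := by
  refine Measure.le_iff.2 fun S hS => ?_
  have hinv := measurable_inversion_zero_one (E := E)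
  rw [Measure.map_apply hinv hS, Measure.restrict_apply (hinv hS), Measure.smul_apply,
    Measure.restrict_apply hS, smul_eq_mul]
  set T := inversion (0 : E) 1 ⁻¹' S ∩ (closedBall 0 2 \ closedBall 0 1)
  have hT : MeasurableSet T :=
    (hinv hS).inter (measurableSet_closedBall.diff measurableSet_closedBall)
  have hT1 : ∀ x ∈ T, 1 < ‖x‖ := fun x hx => not_le.1 (mt mem_closedBall_zero_iff.2 hx.2.2)
  have hT0 : ∀ x ∈ T, x ≠ 0 := fun x hx => norm_pos_iff.1 (one_pos.trans (hT1 x hx))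
  have himage : inversion (0 : E) 1 '' T ⊆ S ∩ ball 0 1 := by
    rintro _ ⟨x, hx, rfl⟩
    exact ⟨hx.1, by simpa [norm_inversion_zero_one] using inv_lt_one_of_one_lt₀ (hT1 x hx)⟩
  have hjac := lintegral_abs_det_fderiv_eq_addHaar_image volume hT
    (fun x hx => (hasFDerivAt_inversion
      (R := 1) (hT0 x hx)).differentiableAt.hasFDerivAt.hasFDerivWithinAt)
    (inversion_injective (0 : E) one_ne_zero).injOn
  calc volume T = 4 ^ Module.finrank ℝ E * (4⁻¹ ^ Module.finrank ℝ E * volume T) := by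
        rw [← mul_assoc, ← mul_pow, ENNReal.mul_inv_cancel (by norm_num) (by norm_num), one_pow,
          one_mul]
    _ ≤ 4 ^ Module.finrank ℝ E * volume (inversion (0 : E) 1 '' T) := by
        gcongr
        rw [← hjac, ← setLIntegral_const]
        exact setLIntegral_mono' hT fun x hx => inv_four_pow_finrank_le_abs_det_fderiv_inversion
          (hT0 x hx) (mem_closedBall_zero_iff.1 hx.2.1)
    _ ≤ 4 ^ Module.finrank ℝ E * volume (S ∩ ball 0 1) := by gcongr

lemma exists_eLpNorm_comp_inversion_le (m : ℝ≥0) :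
    ∃ D : ℝ≥0, ∀ g : E → ℝ, AEStronglyMeasurable g volume →
      eLpNorm (g ∘ inversion 0 1) m (volume.restrict (closedBall 0 2 \ closedBall 0 1)) ≤
        D * eLpNorm g m (volume.restrict (ball 0 1)) := by
  have hfin : ((4 : ℝ≥0∞) ^ Module.finrank ℝ E) ^ (1 / (m : ℝ≥0∞)).toReal ≠ ⊤ :=
    ENNReal.rpow_ne_top_of_nonneg (by positivity) (by simp)
  refine ⟨(((4 : ℝ≥0∞) ^ Module.finrank ℝ E) ^ (1 / (m : ℝ≥0∞)).toReal).toNNReal,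
    fun g hg => ?_⟩
  have hle := map_inversion_restrict_le (E := E)
  rw [← eLpNorm_map_measure ((hg.restrict.smul_measure _).mono_measure hle)
    measurable_inversion_zero_one.aemeasurable, ENNReal.coe_toNNReal hfin, ← smul_eq_mul,
    ← eLpNorm_smul_measure_of_ne_top ENNReal.coe_ne_top]
  exact eLpNorm_mono_measure g hle

variable [FiniteDimensional ℝ F]

lemma ae_norm_fderiv_ballExtension_le (hM : LipschitzWith M (extensionBump E))
    (hV : LipschitzWith K V) :
    ∀ᵐ x ∂volume.restrict (closedBall (0 : E) 2 \ closedBall 0 1),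
      ‖fderiv ℝ (ballExtension V) x‖ ≤
        ((fun y => ‖fderiv ℝ V y‖ + M * ‖V y‖) ∘ inversion 0 1) x := by
  have hdiff : ∀ᵐ x ∂volume.restrict (closedBall (0 : E) 2 \ closedBall 0 1),
      DifferentiableAt ℝ V (inversion 0 1 x) :=
    ae_of_ae_map measurable_inversion_zero_one.aemeasurable
      (map_inversion_restrict_le.absolutelyContinuous.ae_le
        (Measure.ae_smul_measure (ae_restrict_of_ae hV.ae_differentiableAt) _))
  filter_upwards [hdiff,
    ae_restrict_mem (measurableSet_closedBall.diff measurableSet_closedBall)] with x hdx hx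
  exact norm_fderiv_ballExtension_le hM (not_le.1 (mt mem_closedBall_zero_iff.2 hx.2)) hdx

variable [Nontrivial E]

lemma eLpNorm_fderiv_ballExtension_le_add (V : E → F) {p : ℝ≥0∞} (hp : 1 ≤ p) :
    eLpNorm (fderiv ℝ (ballExtension V)) p volume ≤
      eLpNorm (fderiv ℝ V) p (volume.restrict (ball 0 1)) +
        eLpNorm (fderiv ℝ (ballExtension V)) p
          (volume.restrict (closedBall 0 2 \ closedBall 0 1)) := by
  have hsupp : Function.support (fderiv ℝ (ballExtension V)) ⊆ closedBall 0 2 :=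
    (support_fderiv_subset ℝ).trans
      (closure_minimal (support_ballExtension_subset V) isClosed_closedBall)
  have hball : eLpNorm (fderiv ℝ (ballExtension V)) p (volume.restrict (ball 0 1)) =
      eLpNorm (fderiv ℝ V) p (volume.restrict (ball 0 1)) :=
    eLpNorm_congr_ae ((ae_restrict_mem measurableSet_ball).mono fun x hx =>
      fderiv_ballExtension_of_mem_ball V hx)
  have hsphere : ∀ᵐ x : E, x ∉ sphere (0 : E) 1 :=
    measure_eq_zero_iff_ae_notMem.1 (Measure.addHaar_sphere _ _ _)
  rw [← hball]
  refine eLpNorm_le_eLpNorm_restrict_add_of_ae_mem_union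
    (measurable_fderiv ℝ _).aestronglyMeasurable measurableSet_ball
    (measurableSet_closedBall.diff measurableSet_closedBall) ?_ hp
  filter_upwards [hsphere] with x hx1 hx
  rw [← ball_union_sphere (x := (0 : E)) (ε := 1)]
  by_cases hxb : x ∈ ball (0 : E) 1
  · exact Or.inl hxb
  · exact Or.inr ⟨hsupp hx, fun h => h.elim hxb hx1⟩

lemma exists_eLpNorm_fderiv_ballExtension_le {m : ℝ≥0} (hm : 1 ≤ m) :
    ∃ C : ℝ≥0, ∀ (V : E → F) (K : ℝ≥0), LipschitzWith K V →
      eLpNorm (fderiv ℝ (ballExtension V)) m volume ≤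
        C * (eLpNorm V m (volume.restrict (ball 0 1)) +
          eLpNorm (fderiv ℝ V) m (volume.restrict (ball 0 1))) := by
  obtain ⟨M, hM⟩ := exists_lipschitzWith_extensionBump (E := E)
  obtain ⟨D, hD⟩ := exists_eLpNorm_comp_inversion_le (E := E) m
  refine ⟨1 + D * (1 + M), fun V K hV => ?_⟩
  have hm1 : (1 : ℝ≥0∞) ≤ m := by exact_mod_cast hm
  have hdV : AEStronglyMeasurable (fderiv ℝ V) volume :=
    (measurable_fderiv ℝ V).aestronglyMeasurable
  have hV' : AEStronglyMeasurable V volume := hV.continuous.aestronglyMeasurable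
  set a := eLpNorm V m (volume.restrict (ball 0 1))
  set b := eLpNorm (fderiv ℝ V) m (volume.restrict (ball 0 1))
  calc eLpNorm (fderiv ℝ (ballExtension V)) m volume
      ≤ b + eLpNorm (fderiv ℝ (ballExtension V)) m
          (volume.restrict (closedBall 0 2 \ closedBall 0 1)) :=
        eLpNorm_fderiv_ballExtension_le_add V hm1
    _ ≤ b + D * (b + M * a) := by
        gcongr
        exact (eLpNorm_mono_ae_real (ae_norm_fderiv_ballExtension_le hM hV)).trans
          ((hD _ (hdV.norm.add (hV'.norm.const_mul _))).trans (mul_le_mul_right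
            (eLpNorm_norm_add_mul_norm_le hdV.restrict hV'.restrict M hm1) _))
    _ ≤ b + D * (b + M * a) + (a + D * a + D * M * b) := le_self_add
    _ = (1 + D * (1 + M) : ℝ≥0) * (a + b) := by
        push_cast
        ring

end BallExtension

section Capacity

lemma exists_eLpNorm_sub_average_ball_le {E F : Type*} [NormedAddCommGroup E]
    [InnerProductSpace ℝ E] [FiniteDimensional ℝ E] [Nontrivial E] [MeasurableSpace E]
    [BorelSpace E] [NormedAddCommGroup F] [NormedSpace ℝ F] [FiniteDimensional ℝ F] {m s : ℝ≥0}
    (h : IsSobolevPair (Module.finrank ℝ E) m s) :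
    ∃ C : ℝ≥0, ∀ (V : E → F) (K : ℝ≥0), LipschitzWith K V →
      eLpNorm (fun x => V x - ⨍ y in ball (0 : E) 1, V y) s (volume.restrict (ball 0 1)) ≤
        C * eLpNorm (fderiv ℝ V) m (volume.restrict (ball 0 1)) := by
  obtain ⟨C₁, hC₁⟩ := exists_eLpNorm_le_fderiv_of_lipschitzWith (F := F) h
    (isBounded_closedBall (x := (0 : E)) (r := 2))
  obtain ⟨C₂, hC₂⟩ := exists_eLpNorm_fderiv_ballExtension_le (E := E) (F := F) h.one_le
  obtain ⟨C₃, hC₃⟩ := exists_eLpNorm_sub_average_le_of_lipschitzWith (F := F)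
    (μ := (volume : Measure E)) h.one_le (convex_ball 0 1) measurableSet_ball isBounded_ball
  refine ⟨C₁ * (C₂ * (C₃ + 1)), fun V K hV => ?_⟩
  set c := ⨍ y in ball (0 : E) 1, V y
  have hVc : LipschitzWith K fun x => V x - c :=
    LipschitzWith.of_dist_le_mul fun x y => (dist_sub_right _ _ _).trans_le (hV.dist_le_mul x y)
  have hfderiv : fderiv ℝ (fun x => V x - c) = fderiv ℝ V := funext fun x => fderiv_sub_const c
  have hext := hC₂ _ K hVc
  rw [hfderiv] at hext
  obtain ⟨K', hK'⟩ := exists_lipschitzWith_ballExtension hVc.lipschitzOnWith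
  calc eLpNorm (fun x => V x - c) s (volume.restrict (ball 0 1))
      = eLpNorm (ballExtension fun x => V x - c) s (volume.restrict (ball 0 1)) :=
        eLpNorm_congr_ae ((ae_restrict_mem measurableSet_ball).mono fun x hx =>
          (eqOn_ballExtension (fun x => V x - c) (ball_subset_closedBall hx)).symm)
    _ ≤ eLpNorm (ballExtension fun x => V x - c) s volume :=
        eLpNorm_mono_measure _ Measure.restrict_le_self
    _ ≤ C₁ * eLpNorm (fderiv ℝ (ballExtension fun x => V x - c)) m volume :=
        hC₁ _ K' hK' (support_ballExtension_subset _)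
    _ ≤ C₁ * (C₂ * (C₃ * eLpNorm (fderiv ℝ V) m (volume.restrict (ball 0 1)) +
          eLpNorm (fderiv ℝ V) m (volume.restrict (ball 0 1)))) := by
        gcongr
        exact hext.trans (by gcongr; exact hC₃ V K hV)
    _ = (C₁ * (C₂ * (C₃ + 1)) : ℝ≥0) * eLpNorm (fderiv ℝ V) m (volume.restrict (ball 0 1)) := by
        push_cast
        ring

variable {n : ℕ} {m K : ℝ≥0} {Z O : Set (En n)} {f g V : En n → ℝ}

lemma capP_nonneg (p : ℝ) (Z O : Set (En n)) : 0 ≤ capP p Z O := by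
  refine Real.sInf_nonneg ?_
  rintro _ ⟨u, -, rfl⟩
  exact integral_nonneg fun x => Real.rpow_nonneg (norm_nonneg _) _

lemma capP_le_integral {p : ℝ} (hf : f ∈ Adm Z O 1) : capP p Z O ≤ ∫ x in O, gnorm f x ^ p := by
  refine csInf_le ⟨0, ?_⟩ (mem_image_of_mem _ hf)
  rintro _ ⟨u, -, rfl⟩
  exact integral_nonneg fun x => Real.rpow_nonneg (norm_nonneg _) _

lemma ofReal_capP_rpow_le_eLpNorm (hm : m ≠ 0) (hf : f ∈ Adm Z O 1) :
    ENNReal.ofReal (capP m Z O ^ (m : ℝ)⁻¹) ≤ eLpNorm (fderiv ℝ f) m (volume.restrict O) := by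
  rcases eq_or_ne (eLpNorm (fderiv ℝ f) m (volume.restrict O)) ⊤ with htop | htop
  · exact htop ▸ le_top
  have hmem : MemLp (fderiv ℝ f) m (volume.restrict O) :=
    ⟨(measurable_fderiv ℝ f).aestronglyMeasurable, htop.lt_top⟩
  rw [hmem.eLpNorm_eq_integral_rpow_norm (by exact_mod_cast hm) ENNReal.coe_ne_top,
    ENNReal.coe_toReal]
  exact ENNReal.ofReal_le_ofReal
    (Real.rpow_le_rpow (capP_nonneg _ _ _) (capP_le_integral hf) (by positivity))

variable (n) in
/-- The smooth cutoff function which turns functions into admissible functions for the capacity of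
subsets of `closedBall 0 (1 / 2)` in the unit ball. -/
def capacityBump : ContDiffBump (0 : En n) := ⟨1 / 2, 1, by norm_num, by norm_num⟩

lemma norm_capacityBump_le_one (x : En n) : ‖capacityBump n x‖ ≤ 1 := by
  rw [Real.norm_of_nonneg (capacityBump n).nonneg]
  exact (capacityBump n).le_one

lemma exists_lipschitzWith_capacityBump : ∃ M, LipschitzWith M (capacityBump n) :=
  ContDiff.lipschitzWith_of_hasCompactSupport (capacityBump n).hasCompactSupport
    (capacityBump n).contDiff one_ne_zero

lemma capacityBump_smul_mem_Adm (hZ : Z ⊆ closedBall 0 (1 / 2)) (hg : LipschitzWith K g)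
    (hgZ : ∀ x ∈ Z, 1 ≤ g x) :
    (fun x => capacityBump n x • g x) ∈ Adm Z (ball 0 1) 1 := by
  refine ⟨?_, fun x hx => ?_, fun x hx => ?_⟩
  · obtain ⟨M, hM⟩ := exists_lipschitzWith_capacityBump (n := n)
    obtain ⟨B, hB⟩ := (isCompact_closedBall (0 : En n) 1).exists_bound_of_continuousOn
      hg.continuous.continuousOn
    rw [closure_ball _ one_ne_zero]
    exact ⟨_, lipschitzOnWith_smul_of_norm_le (A := 1) (B := B.toNNReal) hM.lipschitzOnWith
      hg.lipschitzOnWith (fun x _ => norm_capacityBump_le_one x)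
      fun x hx => (hB x hx).trans (Real.le_coe_toNNReal B)⟩
  · simpa only [(capacityBump n).one_of_mem_closedBall (hZ hx), one_smul] using hgZ x hx
  · rw [frontier_ball _ one_ne_zero] at hx
    simp only [(capacityBump n).zero_of_le_dist (mem_sphere.1 hx).ge, zero_smul]

lemma exists_ofReal_capP_rpow_le_eLpNorm (n : ℕ) (hm : 1 ≤ m) :
    ∃ M : ℝ≥0, ∀ (Z : Set (En n)) (g : En n → ℝ) (K : ℝ≥0), Z ⊆ closedBall 0 (1 / 2) →
      LipschitzWith K g → (∀ x ∈ Z, 1 ≤ g x) →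
        ENNReal.ofReal (capP m Z (ball 0 1) ^ (m : ℝ)⁻¹) ≤
          eLpNorm (fderiv ℝ g) m (volume.restrict (ball 0 1)) +
            M * eLpNorm g m (volume.restrict (ball 0 1)) := by
  obtain ⟨M, hM⟩ := exists_lipschitzWith_capacityBump (n := n)
  refine ⟨M, fun Z g K hZ hg hgZ => ?_⟩
  have hpt : ∀ᵐ x ∂volume.restrict (ball (0 : En n) 1),
      ‖fderiv ℝ (fun y => capacityBump n y • g y) x‖ ≤ ‖fderiv ℝ g x‖ + M * ‖g x‖ := by
    filter_upwards [ae_restrict_of_ae hg.ae_differentiableAt] with x hx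
    refine (norm_fderiv_smul_le
      ((capacityBump n).contDiffAt.differentiableAt one_ne_zero) hx).trans ?_
    gcongr
    · exact mul_le_of_le_one_left (norm_nonneg _) (norm_capacityBump_le_one x)
    · exact norm_fderiv_le_of_lipschitz ℝ hM
  exact (ofReal_capP_rpow_le_eLpNorm (one_pos.trans_le hm).ne'
    (capacityBump_smul_mem_Adm hZ hg hgZ)).trans ((eLpNorm_mono_ae_real hpt).trans
      (eLpNorm_norm_add_mul_norm_le (measurable_fderiv ℝ g).aestronglyMeasurable
        hg.continuous.aestronglyMeasurable M (by exact_mod_cast hm)))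

lemma exists_ofReal_capP_rpow_le (n : ℕ) (hm : 1 ≤ m) :
    ∃ C : ℝ≥0, ∀ Z ⊆ closedBall (0 : En n) (1 / 2),
      ENNReal.ofReal (capP m Z (ball 0 1) ^ (m : ℝ)⁻¹) ≤ C := by
  obtain ⟨M, hM⟩ := exists_ofReal_capP_rpow_le_eLpNorm n hm
  have : IsFiniteMeasure (volume.restrict (ball (0 : En n) 1)) :=
    isFiniteMeasure_restrict.2 measure_ball_lt_top.ne
  have hone : MemLp (fun _ => (1 : ℝ)) m (volume.restrict (ball (0 : En n) 1)) := memLp_const 1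
  lift eLpNorm (fun _ => (1 : ℝ)) m (volume.restrict (ball (0 : En n) 1)) to ℝ≥0
    using hone.eLpNorm_ne_top with β hβ
  refine ⟨M * β, fun Z hZ => ?_⟩
  calc ENNReal.ofReal (capP m Z (ball 0 1) ^ (m : ℝ)⁻¹)
      ≤ eLpNorm (fderiv ℝ fun _ : En n => (1 : ℝ)) m (volume.restrict (ball 0 1)) +
          M * eLpNorm (fun _ => (1 : ℝ)) m (volume.restrict (ball (0 : En n) 1)) :=
        hM Z (fun _ => 1) 0 hZ (LipschitzWith.const 1) fun _ _ => le_rfl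
    _ = (M * β : ℝ≥0) := by
        rw [eLpNorm_eq_zero_of_ae_zero (f := fderiv ℝ fun _ : En n => (1 : ℝ))
          (.of_forall fun _ => fderiv_const_apply (1 : ℝ)), zero_add, ← hβ, ENNReal.coe_mul]

/- The function `1 - V / c`, where `c` is the average of `V`, is `1` on `Z` and has small norm when
`V` has small gradient. -/
lemma exists_ofReal_capP_rpow_mul_enorm_average_le (hn : 0 < n) (hm : 1 ≤ m) :
    ∃ C : ℝ≥0, ∀ (Z : Set (En n)) (V : En n → ℝ) (K : ℝ≥0), Z ⊆ closedBall 0 (1 / 2) →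
      LipschitzWith K V → (∀ x ∈ Z, V x = 0) →
        ENNReal.ofReal (capP m Z (ball 0 1) ^ (m : ℝ)⁻¹) * ‖⨍ y in ball (0 : En n) 1, V y‖ₑ ≤
          C * eLpNorm (fderiv ℝ V) m (volume.restrict (ball 0 1)) := by
  have : Nonempty (Fin n) := ⟨⟨0, hn⟩⟩
  obtain ⟨M, hM⟩ := exists_ofReal_capP_rpow_le_eLpNorm n hm
  obtain ⟨C, hC⟩ := exists_eLpNorm_sub_average_le_of_lipschitzWith (F := ℝ)
    (μ := (volume : Measure (En n))) hm (convex_ball 0 1) measurableSet_ball isBounded_ball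
  refine ⟨1 + M * C, fun Z V K hZ hV hVZ => ?_⟩
  set c := ⨍ y in ball (0 : En n) 1, V y
  set D := eLpNorm (fderiv ℝ V) m (volume.restrict (ball 0 1))
  rcases eq_or_ne c 0 with hc | hc
  · simp [hc]
  set g : En n → ℝ := (-c⁻¹) • fun x => V x - c with hg_def
  have hg : LipschitzWith (‖-c⁻¹‖₊ * K) g := by
    refine LipschitzWith.of_dist_le_mul fun x y => ?_
    simp only [hg_def, Pi.smul_apply, dist_smul₀, dist_sub_right, NNReal.coe_mul, coe_nnnorm,
      mul_assoc]
    gcongr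
    exact hV.dist_le_mul x y
  have hgZ : ∀ x ∈ Z, 1 ≤ g x := fun x hx => by simp [g, hVZ x hx, hc]
  have hg_norm : eLpNorm g m (volume.restrict (ball 0 1)) ≤ ‖c⁻¹‖ₑ * (C * D) := by
    rw [hg_def, eLpNorm_const_smul, enorm_neg]
    gcongr
    exact hC V K hV
  have hg_fderiv : eLpNorm (fderiv ℝ g) m (volume.restrict (ball 0 1)) = ‖c⁻¹‖ₑ * D := by
    rw [hg_def, fderiv_const_smul_field, show (fderiv ℝ fun x => V x - c) = fderiv ℝ V from
      funext fun x => fderiv_sub_const c, ← enorm_neg]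
    exact eLpNorm_const_smul (-c⁻¹) (fderiv ℝ V) m _
  calc ENNReal.ofReal (capP m Z (ball 0 1) ^ (m : ℝ)⁻¹) * ‖c‖ₑ
      ≤ (‖c⁻¹‖ₑ * D + M * (‖c⁻¹‖ₑ * (C * D))) * ‖c‖ₑ := by
        gcongr
        exact (hM Z g _ hZ hg hgZ).trans (by rw [hg_fderiv]; gcongr)
    _ = ‖c⁻¹ * c‖ₑ * ((1 + M * C : ℝ≥0) * D) := by
        rw [enorm_mul]
        push_cast
        ring
    _ = (1 + M * C : ℝ≥0) * D := by rw [inv_mul_cancel₀ hc, enorm_one, one_mul]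

lemma exists_ofReal_capP_rpow_mul_eLpNorm_le (hn : 0 < n) {s : ℝ≥0} (h : IsSobolevPair n m s) :
    ∃ C : ℝ≥0, ∀ (Z : Set (En n)) (V : En n → ℝ) (K : ℝ≥0), Z ⊆ closedBall 0 (1 / 2) →
      LipschitzWith K V → (∀ x ∈ Z, V x = 0) →
        ENNReal.ofReal (capP m Z (ball 0 1) ^ (m : ℝ)⁻¹) *
            eLpNorm V s (volume.restrict (ball 0 1)) ≤
          C * eLpNorm (fderiv ℝ V) m (volume.restrict (ball 0 1)) := by
  have : Nonempty (Fin n) := ⟨⟨0, hn⟩⟩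
  have : IsFiniteMeasure (volume.restrict (ball (0 : En n) 1)) :=
    isFiniteMeasure_restrict.2 measure_ball_lt_top.ne
  obtain ⟨C₁, hC₁⟩ := exists_eLpNorm_sub_average_ball_le (E := En n) (F := ℝ)
    (by rwa [finrank_euclideanSpace_fin])
  obtain ⟨C₂, hC₂⟩ := exists_ofReal_capP_rpow_le n h.one_le
  obtain ⟨C₃, hC₃⟩ := exists_ofReal_capP_rpow_mul_enorm_average_le hn h.one_le
  have hone : MemLp (fun _ => (1 : ℝ)) s (volume.restrict (ball (0 : En n) 1)) := memLp_const 1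
  lift eLpNorm (fun _ => (1 : ℝ)) s (volume.restrict (ball (0 : En n) 1)) to ℝ≥0
    using hone.eLpNorm_ne_top with β hβ
  lift ENNReal.LpAddConst s to ℝ≥0 using (ENNReal.LpAddConst_lt_top s).ne with A hA
  refine ⟨A * (C₂ * C₁ + C₃ * β), fun Z V K hZ hV hVZ => ?_⟩
  set κ := ENNReal.ofReal (capP m Z (ball (0 : En n) 1) ^ (m : ℝ)⁻¹)
  set c := ⨍ y in ball (0 : En n) 1, V y
  set D := eLpNorm (fderiv ℝ V) m (volume.restrict (ball 0 1))
  have hsplit : eLpNorm V s (volume.restrict (ball 0 1)) ≤ A * (C₁ * D + ‖c‖ₑ * β) := by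
    have hadd := eLpNorm_add_le' (μ := volume.restrict (ball (0 : En n) 1))
      (f := fun x => V x - c) (g := c • fun _ => (1 : ℝ))
      (hV.continuous.sub continuous_const).aestronglyMeasurable
      aestronglyMeasurable_const s
    rw [eLpNorm_const_smul, ← hβ, ← hA,
      show ((fun x => V x - c) + c • fun _ => (1 : ℝ)) = V by ext; simp] at hadd
    exact hadd.trans (by gcongr; exact hC₁ V K hV)
  calc κ * eLpNorm V s (volume.restrict (ball 0 1)) ≤ κ * (A * (C₁ * D + ‖c‖ₑ * β)) := by gcongr
    _ = A * (κ * (C₁ * D) + κ * ‖c‖ₑ * β) := by ring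
    _ ≤ A * (C₂ * (C₁ * D) + C₃ * D * β) := by
        gcongr A * (?_ * _ + ?_ * β)
        exacts [hC₂ Z hZ, hC₃ Z V K hZ hV hVZ]
    _ = (A * (C₂ * C₁ + C₃ * β) : ℝ≥0) * D := by
        push_cast
        ring

end Capacity

section Averages

lemma memLp_restrict_of_lipschitzOnWith {X F : Type*} [PseudoMetricSpace X] [MeasurableSpace X]
    [OpensMeasurableSpace X] [SecondCountableTopology X] [NormedAddCommGroup F] {μ : Measure X}
    {s : Set X} {V : X → F} {K : ℝ≥0} (hV : LipschitzOnWith K V s) (hs : MeasurableSet s)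
    (hsb : Bornology.IsBounded s) (hsμ : μ s ≠ ∞) (p : ℝ≥0∞) : MemLp V p (μ.restrict s) := by
  have : IsFiniteMeasure (μ.restrict s) := isFiniteMeasure_restrict.2 hsμ
  rcases s.eq_empty_or_nonempty with rfl | ⟨z, hz⟩
  · simp
  refine .of_bound (hV.continuousOn.aestronglyMeasurable hs) (‖V z‖ + K * diam s) ?_
  filter_upwards [ae_restrict_mem hs] with x hx
  have hdist : ‖V x - V z‖ ≤ K * diam s := by
    rw [← dist_eq_norm]
    exact (hV.dist_le_mul x hx z hz).trans (by gcongr; exact dist_le_diam_of_mem hsb hx hz)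
  linarith [norm_le_norm_add_norm_sub' (V x) (V z)]

lemma memLp_fderiv_restrict_of_lipschitzOnWith {E F : Type*} [NormedAddCommGroup E]
    [NormedSpace ℝ E] [FiniteDimensional ℝ E] [MeasurableSpace E] [OpensMeasurableSpace E]
    [NormedAddCommGroup F] [NormedSpace ℝ F] [FiniteDimensional ℝ F] {μ : Measure E} {s : Set E}
    {V : E → F} {K : ℝ≥0} (hV : LipschitzOnWith K V s) (hs : IsOpen s) (hsμ : μ s ≠ ∞)
    (p : ℝ≥0∞) : MemLp (fderiv ℝ V) p (μ.restrict s) := by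
  have : IsFiniteMeasure (μ.restrict s) := isFiniteMeasure_restrict.2 hsμ
  refine .of_bound (measurable_fderiv ℝ V).aestronglyMeasurable K ?_
  filter_upwards [ae_restrict_mem hs.measurableSet] with x hx
  exact norm_fderiv_le_of_lipschitzOn ℝ (hs.mem_nhds hx) hV

lemma setAverage_rpow_nonneg {X : Type*} [MeasurableSpace X] {μ : Measure X} {f : X → ℝ}
    (hf : ∀ x, 0 ≤ f x) (s : Set X) (p : ℝ) : 0 ≤ ⨍ x in s, f x ^ p ∂μ :=
  integral_nonneg fun x => Real.rpow_nonneg (hf x) p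

lemma eLpNorm_restrict_eq_ofReal_setAverage {X F : Type*} [MeasurableSpace X]
    [NormedAddCommGroup F] {μ : Measure X} {s : Set X} {f : X → F} {p : ℝ≥0} (hp : p ≠ 0)
    (hf : MemLp f p (μ.restrict s)) (hs : μ.real s ≠ 0) :
    eLpNorm f p (μ.restrict s) = ENNReal.ofReal
      (μ.real s ^ (p : ℝ)⁻¹ * (⨍ x in s, ‖f x‖ ^ (p : ℝ) ∂μ) ^ (p : ℝ)⁻¹) := by
  rw [hf.eLpNorm_eq_integral_rpow_norm (by exact_mod_cast hp) ENNReal.coe_ne_top,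
    ENNReal.coe_toReal, ← Real.mul_rpow measureReal_nonneg
      (setAverage_rpow_nonneg (fun x => norm_nonneg (f x)) s p), setAverage_eq, smul_eq_mul,
    mul_inv_cancel_left₀ hs]

section Scaling

variable {E F : Type*} [NormedAddCommGroup E] [NormedSpace ℝ E] [NormedAddCommGroup F]
  [NormedSpace ℝ F]

lemma fderiv_comp_add_smul (u : E → F) (z x : E) (r : ℝ) :
    fderiv ℝ (fun y => u (z + r • y)) x = r • fderiv ℝ u (z + r • x) := by
  rw [fderiv_comp_smul (f := fun y => u (z + y)), fderiv_comp_add_left]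

lemma exists_lipschitzWith_eqOn_comp_add_smul {u : E → ℝ} {K : ℝ≥0} {z : E} {r : ℝ} (hr : 0 < r)
    (hu : LipschitzOnWith K u (ball z r)) :
    ∃ (V : E → ℝ) (K' : ℝ≥0), LipschitzWith K' V ∧ EqOn V (fun x => u (z + r • x)) (ball 0 1) := by
  have hmaps : MapsTo (fun x : E => z + r • x) (ball 0 1) (ball z r) := fun x hx => by
    rw [mem_ball_zero_iff] at hx
    rw [mem_ball_iff_norm, add_sub_cancel_left, norm_smul, Real.norm_of_nonneg hr.le]
    exact mul_lt_of_lt_one_right hr hx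
  have hlip : LipschitzWith ‖r‖₊ fun x : E => z + r • x :=
    LipschitzWith.of_dist_le_mul fun x y => by rw [dist_add_left, dist_smul₀, coe_nnnorm]
  obtain ⟨V, hV, hVu⟩ := (hu.comp hlip.lipschitzOnWith hmaps).extend_real
  exact ⟨V, _, hV, hVu.symm⟩

variable [FiniteDimensional ℝ E] [MeasurableSpace E] [BorelSpace E] (μ : Measure E)
  [μ.IsAddHaarMeasure]

lemma setAverage_ball_comp_add_smul (f : E → F) (z : E) {r : ℝ} (hr : 0 < r) :
    ⨍ x in ball (0 : E) 1, f (z + r • x) ∂μ = ⨍ x in ball z r, f x ∂μ := by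
  have htranslate : ∫ x in ball (0 : E) r, f (z + x) ∂μ = ∫ x in ball z r, f x ∂μ := by
    rw [← (measurePreserving_add_left μ z).setIntegral_preimage_emb
      (measurableEmbedding_addLeft z) f, preimage_add_ball, sub_self]
  rw [setAverage_eq, setAverage_eq, Measure.setIntegral_comp_smul_of_pos μ (fun x => f (z + x)) _
    hr, smul_unitBall_of_pos hr, htranslate, smul_smul, ← mul_inv_rev, Measure.real, Measure.real,
    Measure.addHaar_ball_of_pos μ z hr, ENNReal.toReal_mul, ENNReal.toReal_ofReal (by positivity)]

end Scaling

variable {n : ℕ} {m s : ℝ≥0}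

lemma exists_capP_rpow_mul_setAverage_unitBall_le (hn : 0 < n) (h : IsSobolevPair n m s) :
    ∃ C : ℝ≥0, ∀ (Z : Set (En n)) (V : En n → ℝ) (K : ℝ≥0), Z ⊆ closedBall 0 (1 / 2) →
      LipschitzWith K V → (∀ x ∈ Z, V x = 0) →
        capP m Z (ball 0 1) ^ (m : ℝ)⁻¹ * (⨍ x in ball 0 1, |V x| ^ (s : ℝ)) ^ (s : ℝ)⁻¹ ≤
          C * (⨍ x in ball 0 1, gnorm V x ^ (m : ℝ)) ^ (m : ℝ)⁻¹ := by
  obtain ⟨C, hC⟩ := exists_ofReal_capP_rpow_mul_eLpNorm_le hn h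
  have hball : volume (ball (0 : En n) 1) ≠ ∞ := measure_ball_lt_top.ne
  lift volume.real (ball (0 : En n) 1) to ℝ≥0 using measureReal_nonneg with β hβ
  have hβ0 : β ≠ 0 := by
    rw [← NNReal.coe_ne_zero, hβ]
    exact (ENNReal.toReal_pos (measure_ball_pos _ _ one_pos).ne' hball).ne'
  refine ⟨C * β ^ (m : ℝ)⁻¹ / β ^ (s : ℝ)⁻¹, fun Z V K hZ hV hVZ => ?_⟩
  have hle := hC Z V K hZ hV hVZ
  rw [eLpNorm_restrict_eq_ofReal_setAverage h.pos.ne' (memLp_restrict_of_lipschitzOnWith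
      hV.lipschitzOnWith measurableSet_ball isBounded_ball hball _) (by simpa [← hβ]),
    eLpNorm_restrict_eq_ofReal_setAverage (one_pos.trans_le h.one_le).ne'
      (memLp_fderiv_restrict_of_lipschitzOnWith hV.lipschitzOnWith isOpen_ball hball _)
      (by simpa [← hβ]), ← hβ, ← ENNReal.ofReal_mul (Real.rpow_nonneg (capP_nonneg _ _ _) _),
    ← ENNReal.ofReal_coe_nnreal, ← ENNReal.ofReal_mul C.coe_nonneg,
    ENNReal.ofReal_le_ofReal_iff (mul_nonneg C.coe_nonneg (mul_nonneg (by positivity)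
      (Real.rpow_nonneg (setAverage_rpow_nonneg (fun x => norm_nonneg _) _ _) _)))] at hle
  push_cast
  rw [div_mul_eq_mul_div, le_div_iff₀ (by positivity)]
  calc capP m Z (ball 0 1) ^ (m : ℝ)⁻¹ * (⨍ x in ball 0 1, |V x| ^ (s : ℝ)) ^ (s : ℝ)⁻¹ *
        β ^ (s : ℝ)⁻¹
      = capP m Z (ball 0 1) ^ (m : ℝ)⁻¹ *
          (β ^ (s : ℝ)⁻¹ * (⨍ x in ball 0 1, |V x| ^ (s : ℝ)) ^ (s : ℝ)⁻¹) := by ring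
    _ ≤ C * (β ^ (m : ℝ)⁻¹ * (⨍ x in ball 0 1, gnorm V x ^ (m : ℝ)) ^ (m : ℝ)⁻¹) := hle
    _ = C * β ^ (m : ℝ)⁻¹ * (⨍ x in ball 0 1, gnorm V x ^ (m : ℝ)) ^ (m : ℝ)⁻¹ := by ring

lemma exists_capP_rpow_mul_setAverage_ball_le (hn : 0 < n) (h : IsSobolevPair n m s) :
    ∃ C : ℝ≥0, ∀ (Z : Set (En n)) (u : En n → ℝ) (K : ℝ≥0) (z : En n) (r : ℝ), 0 < r →
      LipschitzOnWith K u (ball z r) → Z ⊆ {x ∈ closedBall 0 (1 / 2) | u (z + r • x) = 0} →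
        capP m Z (ball 0 1) ^ (m : ℝ)⁻¹ * (⨍ x in ball z r, |u x| ^ (s : ℝ)) ^ (s : ℝ)⁻¹ ≤
          C * (⨍ x in ball z r, (r * gnorm u x) ^ (m : ℝ)) ^ (m : ℝ)⁻¹ := by
  obtain ⟨C, hC⟩ := exists_capP_rpow_mul_setAverage_unitBall_le hn h
  refine ⟨C, fun Z u K z r hr hu hZ => ?_⟩
  obtain ⟨V, K', hV, hVu⟩ := exists_lipschitzWith_eqOn_comp_add_smul hr hu
  have hVZ : ∀ x ∈ Z, V x = 0 := fun x hx =>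
    (hVu (closedBall_subset_ball (by norm_num) (hZ hx).1)).trans (hZ hx).2
  have hgnorm : ∀ x ∈ ball (0 : En n) 1, gnorm V x = r * gnorm u (z + r • x) := fun x hx => by
    rw [gnorm, gnorm, (hVu.eventuallyEq_of_mem (isOpen_ball.mem_nhds hx)).fderiv_eq,
      fderiv_comp_add_smul, norm_smul, Real.norm_of_nonneg hr.le]
  have havg : ⨍ x in ball 0 1, |V x| ^ (s : ℝ) = ⨍ x in ball z r, |u x| ^ (s : ℝ) := by
    rw [← setAverage_ball_comp_add_smul _ _ z hr]
    exact setAverage_congr_fun measurableSet_ball (.of_forall fun x hx => by rw [hVu hx])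
  have havg_gnorm : ⨍ x in ball 0 1, gnorm V x ^ (m : ℝ) =
      ⨍ x in ball z r, (r * gnorm u x) ^ (m : ℝ) := by
    rw [← setAverage_ball_comp_add_smul _ _ z hr]
    exact setAverage_congr_fun measurableSet_ball (.of_forall fun x hx => by rw [hgnorm x hx])
  rw [← havg, ← havg_gnorm]
  exact hC Z V K' (fun x hx => (hZ hx).1) hV hVZ

lemma exists_setAverage_ball_rpow_le (hn : 0 < n) (h : IsSobolevPair n m s) :
    ∃ C : ℝ≥0, ∀ (Z : Set (En n)) (u : En n → ℝ) (K : ℝ≥0) (z : En n) (r : ℝ), 0 < r →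
      LipschitzOnWith K u (ball z r) → Z ⊆ {x ∈ closedBall 0 (1 / 2) | u (z + r • x) = 0} →
        0 < capP m Z (ball 0 1) →
          ⨍ x in ball z r, |u x| ^ (s : ℝ) ≤
            C * ((⨍ x in ball z r, (r * gnorm u x) ^ (m : ℝ)) / capP m Z (ball 0 1)) ^
              ((s : ℝ) / m) := by
  obtain ⟨C, hC⟩ := exists_capP_rpow_mul_setAverage_ball_le hn h
  refine ⟨C ^ (s : ℝ), fun Z u K z r hr hu hZ hcap => ?_⟩
  have hs : (0 : ℝ) < s := h.pos
  have hG : 0 ≤ ⨍ x in ball z r, (r * gnorm u x) ^ (m : ℝ) :=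
    setAverage_rpow_nonneg (fun x => mul_nonneg hr.le (norm_nonneg _)) _ _
  have hle := hC Z u K z r hr hu hZ
  rw [← le_div_iff₀' (by positivity), mul_div_assoc, ← Real.div_rpow hG hcap.le,
    Real.rpow_inv_le_iff_of_pos (setAverage_rpow_nonneg (fun x => abs_nonneg _) _ _)
      (by positivity) hs, Real.mul_rpow (by positivity) (by positivity),
    ← Real.rpow_mul (by positivity), inv_mul_eq_div] at hle
  exact_mod_cast hle

end Averages

section DoublePhase

lemma isSobolevPair_of_le_mul_div_sub {d : ℕ} {m s : ℝ≥0} (hm : 1 ≤ m) (hs : 0 < s)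
    (h : (m : ℝ) < d → (s : ℝ) ≤ d * m / (d - m)) : IsSobolevPair d m s := by
  refine ⟨hm, hs, fun hmd => ?_⟩
  have hm0 : (0 : ℝ) < m := one_pos.trans_le (by exact_mod_cast hm)
  have hs0 : (0 : ℝ) < s := hs
  calc (m : ℝ)⁻¹ - (d : ℝ)⁻¹ = ((d : ℝ) * m / (d - m))⁻¹ := by
        have hd0 : (0 : ℝ) < d := hm0.trans hmd
        rw [inv_div, sub_div, div_mul_cancel_left₀ hd0.ne', div_mul_cancel_right₀ hm0.ne']
    _ ≤ (s : ℝ)⁻¹ := inv_anti₀ hs0 (h hmd)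

lemma div_rpow_add_mul_div_rpow {p q m κ G : ℝ} (hp : 0 ≤ p) (hpq : p ≤ q) (hm : 0 < m)
    (hκ : 0 < κ) (hG : 0 ≤ G) (b : ℝ) :
    (G / κ) ^ (p / m) + b * (G / κ) ^ (q / m) =
      (1 + b * κ ^ ((p - q) / m) * (G ^ (1 / m)) ^ (q - p)) / κ ^ (p / m) * G ^ (p / m) := by
  have hGq : (G ^ (1 / m)) ^ (q - p) * G ^ (p / m) = G ^ (q / m) := by
    rw [← Real.rpow_mul hG, ← Real.rpow_add_of_nonneg hG
      (mul_nonneg (by positivity) (sub_nonneg.2 hpq)) (by positivity)]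
    congr 1
    ring
  rw [Real.div_rpow hG hκ.le, Real.div_rpow hG hκ.le, ← hGq, sub_div, Real.rpow_sub hκ]
  field_simp

lemma setAverage_abs_rpow_add_mul {n : ℕ} {u : En n → ℝ} {K : ℝ≥0} {z : En n} {r p q : ℝ}
    (hu : LipschitzOnWith K u (ball z r)) (hp : 0 < p) (hq : 0 < q) (b : ℝ) :
    ⨍ x in ball z r, (|u x| ^ p + b * |u x| ^ q) =
      (⨍ x in ball z r, |u x| ^ p) + b * ⨍ x in ball z r, |u x| ^ q := by
  have hint : ∀ {s : ℝ}, 0 < s → IntegrableOn (fun x => |u x| ^ s) (ball z r) := fun {s} hs => by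
    have hmem := memLp_restrict_of_lipschitzOnWith hu measurableSet_ball isBounded_ball
      (measure_ball_lt_top (μ := volume)).ne (ENNReal.ofReal s)
    simpa only [IntegrableOn, ENNReal.toReal_ofReal hs.le, Real.norm_eq_abs] using
      hmem.integrable_norm_rpow (by simpa using hs) ENNReal.ofReal_ne_top
  rw [average, average, average, integral_add (hint hp).to_average
    ((hint hq).to_average.const_mul b), integral_const_mul]

theorem mazya_type_inequality_general (n : ℕ) (hn : 0 < n) (p q m : ℝ) (hp : 0 < p) (hpq : p ≤ q)
    (hm : 1 ≤ m) (hmn : m < (n : ℝ) → q ≤ (n : ℝ) * m / ((n : ℝ) - m)) :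
    ∃ c : ℝ, 0 < c ∧
      ∀ (z : En n) (r : ℝ) (u : En n → ℝ), 0 < r → (∃ K, LipschitzOnWith K u (ball z r)) →
        ∀ Z ⊆ {x ∈ closedBall (0 : En n) (1 / 2) | u (z + r • x) = 0},
          0 < capP m Z (ball (0 : En n) 1) → ∀ b : ℝ, 0 ≤ b →
            (⨍ x in ball z r, (|u x| ^ p + b * |u x| ^ q)) ≤
              c * (1 + b * capP m Z (ball (0 : En n) 1) ^ ((p - q) / m) *
                    ((⨍ x in ball z r, (r * gnorm u x) ^ m) ^ (1 / m)) ^ (q - p)) /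
                  capP m Z (ball (0 : En n) 1) ^ (p / m) *
                (⨍ x in ball z r, (r * gnorm u x) ^ m) ^ (p / m) := by
  have hm0 : 0 < m := one_pos.trans_le hm
  have hq : 0 < q := hp.trans_le hpq
  lift m to ℝ≥0 using hm0.le
  lift p to ℝ≥0 using hp.le
  lift q to ℝ≥0 using hq.le
  obtain ⟨Cp, hCp⟩ := exists_setAverage_ball_rpow_le hn
    (isSobolevPair_of_le_mul_div_sub hm hp fun hmd => hpq.trans (hmn hmd))
  obtain ⟨Cq, hCq⟩ := exists_setAverage_ball_rpow_le hn (isSobolevPair_of_le_mul_div_sub hm hq hmn)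
  refine ⟨Cp + Cq + 1, by positivity, fun z r u hr ⟨K, hu⟩ Z hZ hcap b hb => ?_⟩
  have hG : 0 ≤ ⨍ x in ball z r, (r * gnorm u x) ^ (m : ℝ) :=
    setAverage_rpow_nonneg (fun x => mul_nonneg hr.le (norm_nonneg _)) _ _
  rw [setAverage_abs_rpow_add_mul hu hp hq, mul_div_assoc, mul_assoc,
    ← div_rpow_add_mul_div_rpow hp.le hpq hm0 hcap hG, mul_add, mul_left_comm]
  gcongr
  · refine (hCp Z u K z r hr hu hZ hcap).trans (mul_le_mul_of_nonneg_right ?_ (by positivity))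
    linarith [Cq.coe_nonneg]
  · refine (hCq Z u K z r hr hu hZ hcap).trans (mul_le_mul_of_nonneg_right ?_ (by positivity))
    linarith [Cp.coe_nonneg]

variable {n : ℕ} {a : En n → ℝ}

lemma aInfOn_nonneg (ha : ∀ x, 0 ≤ a x) (O : Set (En n)) : 0 ≤ aInfOn a O :=
  Real.sInf_nonneg (forall_mem_image.2 fun x _ => ha x)

lemma aSupOn_nonneg (ha : ∀ x, 0 ≤ a x) (O : Set (En n)) : 0 ≤ aSupOn a O :=
  Real.sSup_nonneg (forall_mem_image.2 fun x _ => ha x)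

end DoublePhase

/-- **Maz'ya type inequality for the double-phase integrand** (Lemma 5.1). -/
theorem mazya_type_inequality
    (n : ℕ) (hn : 0 < n) (p q m : ℝ)
    (hp : 1 < p) (hpq : p < q) (hm1 : 1 ≤ m) (hmp : m ≤ p)
    (hmn : m < (n : ℝ) → q ≤ (n : ℝ) * m / ((n : ℝ) - m)) :
    ∃ c : ℝ, 0 < c ∧
      ∀ (α A : ℝ) (a : En n → ℝ),
        0 < α → α ≤ 1 → (∀ x, 0 ≤ a x) → 0 ≤ A →
        (∀ x y, |a x - a y| ≤ A * dist x y ^ α) →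
        q / p ≤ 1 + α / n →
        ∀ (z : En n) (r : ℝ) (u : En n → ℝ), 0 < r →
          (∃ K, LipschitzOnWith K u (ball z r)) →
          ∀ Z : Set (En n),
            Z = {x ∈ closedBall (0 : En n) (1 / 2) | u (z + r • x) = 0} →
            0 < capP m Z (ball (0 : En n) 1) →
            ∀ (y : En n) (R astar : ℝ), 0 < R →
              (astar = aInfOn a (ball y R) ∨ astar = aSupOn a (ball y R)) →
              (⨍ x in ball z r, (|u x| ^ p + astar * |u x| ^ q)) ≤
                c * (1 + astar * capP m Z (ball (0 : En n) 1) ^ ((p - q) / m) *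
                      ((⨍ x in ball z r, (r * gnorm u x) ^ m) ^ (1 / m)) ^ (q - p)) /
                    capP m Z (ball (0 : En n) 1) ^ (p / m) *
                  (⨍ x in ball z r, (r * gnorm u x) ^ m) ^ (p / m) := by
  obtain ⟨c, hc, hle⟩ := mazya_type_inequality_general n hn p q m (by linarith) hpq.le hm1 hmn
  refine ⟨c, hc, ?_⟩
  rintro - - a - - ha - - - z r u hr hu Z rfl hcap y R astar - hastar
  refine hle z r u hr hu _ subset_rfl hcap astar ?_
  rcases hastar with rfl | rfl
  exacts [aInfOn_nonneg ha _, aSupOn_nonneg ha _]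
end
end

section
/- Let n ≥ 1, 1 < p < q < ∞, a_o > 0, and set φ_o(s) = s^p + a_o s^q. Then there is a constant c = c(n,p,q,a_o) such that for every 0 < r ≤ 1 and every nonnegative Lipschitz function u with compact support in B(0,r) satisfying u ≥ 1 on the closed ball B̄(0, r/2), one has r^{n−q} ≤ c · ∫_{B(0,r)} φ_o(|∇u(x)|) dx. In particular, since for every constant C > 0 there is r_C > 0 with C r^{q−n} < r^{p−n} for all 0 < r < r_C, this energy lower bound is of strictly larger order than the p-capacity scale r^{n−p} as r → 0 when p < q. -/
open MeasureTheory Metric Set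

noncomputable section

open Filter
open scoped Topology ENNReal

/-!
Let `B = B(x₀, r)`, and let `L` be a norm-one functional with `L e = 1` for a unit vector `e`.
Integrating `|u|` by parts against `x ↦ L x - L x₀`, which is at most `r` in absolute value on `B`,
gives the `L¹` Poincaré inequality `⨍_B |u| ≤ r ⨍_B |∇u|`, and Jensen's inequality upgrades it to
`(⨍_B |u|)^q ≤ r^q ⨍_B |∇u|^q`. If `|u| ≥ 1` on the concentric ball of radius `r / 2`, the left-hand
side is at least `2^{-nq}`, while `|B|` is proportional to `r^n`; so already the `q`-phase of the
energy is at least of order `r^{n-q}`.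
-/

lemma eventually_mul_rpow_lt_rpow {a b : ℝ} (hab : a < b) (C : ℝ) :
    ∀ᶠ r in 𝓝[>] (0 : ℝ), C * r ^ b < r ^ a := by
  have hlim : Tendsto (fun r : ℝ => C * r ^ (b - a)) (𝓝[>] 0) (𝓝 0) := by
    have hcont := (Real.continuousAt_rpow_const 0 (b - a) (Or.inr (sub_pos.2 hab).le)).tendsto
    rw [Real.zero_rpow (sub_pos.2 hab).ne'] at hcont
    simpa using (hcont.mono_left nhdsWithin_le_nhds).const_mul C
  filter_upwards [hlim.eventually_lt_const one_pos, self_mem_nhdsWithin] with r hr hr0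
  calc C * r ^ b = C * r ^ (b - a) * r ^ a := by
        rw [mul_assoc, ← Real.rpow_add hr0, sub_add_cancel]
    _ < r ^ a := mul_lt_of_lt_one_left (Real.rpow_pos_of_pos hr0 a) hr

lemma rpow_setAverage_le_setAverage_rpow {α : Type*} [MeasurableSpace α] {μ : Measure α}
    {s : Set α} {f : α → ℝ} {q : ℝ} (hq : 1 ≤ q) (h0 : μ s ≠ 0) (hs : μ s ≠ ∞)
    (hf : ∀ᵐ x ∂μ.restrict s, 0 ≤ f x) (hfi : IntegrableOn f s μ)
    (hfq : IntegrableOn (fun x => f x ^ q) s μ) :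
    (⨍ x in s, f x ∂μ) ^ q ≤ ⨍ x in s, f x ^ q ∂μ :=
  (convexOn_rpow hq).map_set_average_le
    (Real.continuous_rpow_const (zero_le_one.trans hq)).continuousOn isClosed_Ici h0 hs
    hf hfi hfq

lemma norm_fderiv_abs_le {E : Type*} [NormedAddCommGroup E] [NormedSpace ℝ E] {u : E → ℝ} {x : E}
    (hu : ContinuousAt u x) : ‖fderiv ℝ (fun y => |u y|) x‖ ≤ ‖fderiv ℝ u x‖ := by
  rcases lt_trichotomy (u x) 0 with hneg | hzero | hpos
  · have habs : (fun y => |u y|) =ᶠ[𝓝 x] fun y => -u y :=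
      (hu.eventually_lt_const hneg).mono fun y hy => abs_of_neg hy
    rw [habs.fderiv_eq, fderiv_fun_neg, norm_neg]
  · have hmin : IsLocalMin (fun y => |u y|) x := .of_forall fun y => by simp [hzero]
    simp [hmin.fderiv_eq_zero]
  · have habs : (fun y => |u y|) =ᶠ[𝓝 x] u :=
      (hu.eventually_const_lt hpos).mono fun y hy => abs_of_pos hy
    rw [habs.fderiv_eq]

lemma hasCompactSupport_of_tsupport_subset_ball {X R : Type*} [PseudoMetricSpace X]
    [ProperSpace X] [Zero R] {u : X → R} {x₀ : X} {r : ℝ} (hsupp : tsupport u ⊆ ball x₀ r) :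
    HasCompactSupport u :=
  (isCompact_closedBall x₀ r).of_isClosed_subset (isClosed_tsupport u)
    (hsupp.trans ball_subset_closedBall)

lemma measureReal_ball_pos {X : Type*} [PseudoMetricSpace X] [ProperSpace X] [MeasurableSpace X]
    {μ : Measure X} [μ.IsOpenPosMeasure] [IsFiniteMeasureOnCompacts μ] {x₀ : X} {r : ℝ}
    (hr : 0 < r) : 0 < μ.real (ball x₀ r) :=
  ENNReal.toReal_pos (measure_ball_pos μ x₀ hr).ne' measure_ball_lt_top.ne

section NormedSpace

variable {E : Type*} [NormedAddCommGroup E] [NormedSpace ℝ E] [MeasurableSpace E] [BorelSpace E]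
  {μ : Measure E} {K : NNReal} {u : E → ℝ} {x₀ : E} {r ρ q : ℝ}

lemma integrableOn_norm_fderiv_rpow {F : Type*} [NormedAddCommGroup F] [NormedSpace ℝ F]
    [CompleteSpace F] {f : E → F} (hf : LipschitzWith K f) (hq : 0 ≤ q) {s : Set E}
    (hs : μ s ≠ ∞) : IntegrableOn (fun x => ‖fderiv ℝ f x‖ ^ q) s μ := by
  refine Measure.integrableOn_of_bounded (M := (K : ℝ) ^ q) hs
    ((measurable_fderiv ℝ f).norm.pow_const q).aestronglyMeasurable (ae_of_all _ fun x => ?_)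
  rw [Real.norm_of_nonneg (by positivity)]
  gcongr
  exact norm_fderiv_le_of_lipschitz ℝ hf

lemma integrableOn_norm_fderiv {F : Type*} [NormedAddCommGroup F] [NormedSpace ℝ F]
    [CompleteSpace F] {f : E → F} (hf : LipschitzWith K f) {s : Set E} (hs : μ s ≠ ∞) :
    IntegrableOn (fun x => ‖fderiv ℝ f x‖) s μ := by
  simpa using integrableOn_norm_fderiv_rpow hf zero_le_one hs

lemma mul_setIntegral_norm_fderiv_rpow_le {p a : ℝ} (hp : 0 ≤ p) (hq : 0 ≤ q)
    (hu : LipschitzWith K u) {s : Set E} (hs : μ s ≠ ∞) :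
    a * ∫ x in s, ‖fderiv ℝ u x‖ ^ q ∂μ ≤
      ∫ x in s, (‖fderiv ℝ u x‖ ^ p + a * ‖fderiv ℝ u x‖ ^ q) ∂μ := by
  have hp_int := integrableOn_norm_fderiv_rpow hu hp hs
  have hq_int := (integrableOn_norm_fderiv_rpow hu hq hs).const_mul a
  rw [← integral_const_mul]
  exact integral_mono hq_int (hp_int.add hq_int) fun x =>
    le_add_of_nonneg_left (Real.rpow_nonneg (norm_nonneg _) p)

variable [FiniteDimensional ℝ E] [μ.IsAddHaarMeasure]

lemma abs_setIntegral_ball_le_mul_setIntegral_norm_fderiv [Nontrivial E] (hu : LipschitzWith K u)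
    (hsupp : tsupport u ⊆ ball x₀ r) :
    |∫ x in ball x₀ r, u x ∂μ| ≤ r * ∫ x in ball x₀ r, ‖fderiv ℝ u x‖ ∂μ := by
  obtain ⟨e, he⟩ := exists_norm_eq E zero_le_one
  obtain ⟨L, hL, hLe⟩ := exists_dual_vector' ℝ e
  have hderiv : ∀ x, lineDeriv ℝ (fun y => L y - L x₀) x e = 1 := fun x => by
    rw [((L.hasFDerivAt.sub_const (L x₀)).hasLineDerivAt e).lineDeriv, hLe, he, RCLike.ofReal_one]
  have hparts : ∫ x, u x ∂μ = ∫ x, lineDeriv ℝ u x (-e) * (L x - L x₀) ∂μ := by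
    simpa only [hderiv, one_mul] using (L.lipschitz.sub (.const (L x₀))).integral_lineDeriv_mul_eq
      hu (hasCompactSupport_of_tsupport_subset_ball hsupp) e
  have hu_zero : ∀ x, x ∉ ball x₀ r → u x = 0 := fun x hx =>
    image_eq_zero_of_notMem_tsupport fun h => hx (hsupp h)
  have hu'_zero : ∀ x, x ∉ ball x₀ r → lineDeriv ℝ u x (-e) * (L x - L x₀) = 0 := fun x hx => by
    have hfderiv := HasFDerivAt.of_notMem_tsupport ℝ fun h => hx (hsupp h)
    rw [(hfderiv.hasLineDerivAt (-e)).lineDeriv, zero_apply, zero_mul]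
  have hbound : ∀ᵐ x ∂μ.restrict (ball x₀ r),
      ‖lineDeriv ℝ u x (-e) * (L x - L x₀)‖ ≤ r * ‖fderiv ℝ u x‖ := by
    filter_upwards [ae_restrict_mem measurableSet_ball,
      ae_restrict_of_ae hu.ae_differentiableAt] with x hx hdiff
    have hL_le : ‖L x - L x₀‖ ≤ r := by
      simpa [← map_sub, hL] using L.le_opNorm_of_le (mem_ball_iff_norm.1 hx).le
    have hu'_le : ‖lineDeriv ℝ u x (-e)‖ ≤ ‖fderiv ℝ u x‖ := by
      simpa [hdiff.lineDeriv_eq_fderiv, he] using (fderiv ℝ u x).le_opNorm (-e)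
    rw [mul_comm r]
    exact norm_mul_le_of_le hu'_le hL_le
  rw [setIntegral_eq_integral_of_forall_compl_eq_zero hu_zero, hparts,
    ← setIntegral_eq_integral_of_forall_compl_eq_zero hu'_zero, ← integral_const_mul]
  exact norm_integral_le_of_norm_le
    ((integrableOn_norm_fderiv hu measure_ball_lt_top.ne).const_mul r) hbound

lemma setAverage_ball_abs_le_mul_setAverage_norm_fderiv [Nontrivial E] (hr : 0 ≤ r)
    (hu : LipschitzWith K u) (hsupp : tsupport u ⊆ ball x₀ r) :
    ⨍ x in ball x₀ r, |u x| ∂μ ≤ r * ⨍ x in ball x₀ r, ‖fderiv ℝ u x‖ ∂μ := by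
  have habs : LipschitzWith K fun x => |u x| := by
    simpa [Function.comp_def] using lipschitzWith_one_norm.comp hu
  have habs_supp : tsupport (fun x => |u x|) ⊆ ball x₀ r :=
    (closure_mono fun x => by simp).trans hsupp
  have hint : ∫ x in ball x₀ r, |u x| ∂μ ≤ r * ∫ x in ball x₀ r, ‖fderiv ℝ u x‖ ∂μ :=
    calc ∫ x in ball x₀ r, |u x| ∂μ
        ≤ r * ∫ x in ball x₀ r, ‖fderiv ℝ (fun y => |u y|) x‖ ∂μ :=
          (le_abs_self _).trans (abs_setIntegral_ball_le_mul_setIntegral_norm_fderiv habs habs_supp)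
      _ ≤ r * ∫ x in ball x₀ r, ‖fderiv ℝ u x‖ ∂μ := by
          gcongr ?_ * ?_
          exact integral_mono (integrableOn_norm_fderiv habs measure_ball_lt_top.ne)
            (integrableOn_norm_fderiv hu measure_ball_lt_top.ne)
            fun x => norm_fderiv_abs_le hu.continuous.continuousAt
  rw [setAverage_eq, setAverage_eq, smul_eq_mul, smul_eq_mul, mul_left_comm]
  gcongr

lemma rpow_setAverage_ball_abs_le [Nontrivial E] (hq : 1 ≤ q) (hr : 0 < r)
    (hu : LipschitzWith K u) (hsupp : tsupport u ⊆ ball x₀ r) :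
    (⨍ x in ball x₀ r, |u x| ∂μ) ^ q ≤ r ^ q * ⨍ x in ball x₀ r, ‖fderiv ℝ u x‖ ^ q ∂μ := by
  have hμ : μ (ball x₀ r) ≠ ∞ := measure_ball_lt_top.ne
  have h0 : 0 ≤ ⨍ x in ball x₀ r, |u x| ∂μ := integral_nonneg fun x => abs_nonneg _
  have h0' : 0 ≤ ⨍ x in ball x₀ r, ‖fderiv ℝ u x‖ ∂μ := integral_nonneg fun x => norm_nonneg _
  calc (⨍ x in ball x₀ r, |u x| ∂μ) ^ q
      ≤ (r * ⨍ x in ball x₀ r, ‖fderiv ℝ u x‖ ∂μ) ^ q := by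
        gcongr
        exact setAverage_ball_abs_le_mul_setAverage_norm_fderiv hr.le hu hsupp
    _ = r ^ q * (⨍ x in ball x₀ r, ‖fderiv ℝ u x‖ ∂μ) ^ q := Real.mul_rpow hr.le h0'
    _ ≤ r ^ q * ⨍ x in ball x₀ r, ‖fderiv ℝ u x‖ ^ q ∂μ := by
        gcongr
        exact rpow_setAverage_le_setAverage_rpow hq (measure_ball_pos μ x₀ hr).ne' hμ
          (ae_of_all _ fun x => norm_nonneg _) (integrableOn_norm_fderiv hu hμ)
          (integrableOn_norm_fderiv_rpow hu (zero_le_one.trans hq) hμ)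

lemma measureReal_ball_eq_pow_finrank_mul (hr : 0 < r) :
    μ.real (ball x₀ r) = r ^ Module.finrank ℝ E * μ.real (ball 0 1) := by
  simp [measureReal_def, μ.addHaar_ball_of_pos x₀ hr, hr.le]

lemma div_pow_finrank_le_setAverage_ball (hρ : 0 < ρ) (hρr : ρ ≤ r) {f : E → ℝ}
    (hf : IntegrableOn f (ball x₀ r) μ) (hf0 : ∀ x, 0 ≤ f x) (hf1 : ∀ x ∈ ball x₀ ρ, 1 ≤ f x) :
    (ρ / r) ^ Module.finrank ℝ E ≤ ⨍ x in ball x₀ r, f x ∂μ := by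
  have hr : 0 < r := hρ.trans_le hρr
  have hball : ball x₀ ρ ⊆ ball x₀ r := ball_subset_ball hρr
  have hω : 0 < μ.real (ball (0 : E) 1) := measureReal_ball_pos one_pos
  calc (ρ / r) ^ Module.finrank ℝ E = (μ.real (ball x₀ r))⁻¹ * μ.real (ball x₀ ρ) := by
        rw [measureReal_ball_eq_pow_finrank_mul hr, measureReal_ball_eq_pow_finrank_mul hρ, div_pow]
        field_simp
    _ = (μ.real (ball x₀ r))⁻¹ * ∫ _ in ball x₀ ρ, (1 : ℝ) ∂μ := by simp
    _ ≤ (μ.real (ball x₀ r))⁻¹ * ∫ x in ball x₀ ρ, f x ∂μ := by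
        gcongr ?_ * ?_
        exact setIntegral_mono_on (integrableOn_const measure_ball_lt_top.ne)
          (hf.mono_set hball) measurableSet_ball hf1
    _ ≤ (μ.real (ball x₀ r))⁻¹ * ∫ x in ball x₀ r, f x ∂μ := by
        gcongr ?_ * ?_
        exact setIntegral_mono_set hf (ae_of_all _ hf0) hball.eventuallyLE
    _ = ⨍ x in ball x₀ r, f x ∂μ := by rw [setAverage_eq, smul_eq_mul]

lemma mul_rpow_finrank_sub_le_setIntegral_norm_fderiv_rpow [Nontrivial E] (hq : 1 ≤ q)
    (hρ : 0 < ρ) (hρr : ρ ≤ r) (hu : LipschitzWith K u) (hsupp : tsupport u ⊆ ball x₀ r)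
    (hu1 : ∀ x ∈ ball x₀ ρ, 1 ≤ |u x|) :
    ((ρ / r) ^ Module.finrank ℝ E) ^ q * μ.real (ball 0 1) * r ^ (Module.finrank ℝ E - q) ≤
      ∫ x in ball x₀ r, ‖fderiv ℝ u x‖ ^ q ∂μ := by
  have hr : 0 < r := hρ.trans_le hρr
  have hω : 0 < μ.real (ball (0 : E) 1) := measureReal_ball_pos one_pos
  have hint : IntegrableOn (fun x => |u x|) (ball x₀ r) μ :=
    (hu.continuous.integrable_of_hasCompactSupport
      (hasCompactSupport_of_tsupport_subset_ball hsupp)).abs.integrableOn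
  have havg : ((ρ / r) ^ Module.finrank ℝ E) ^ q ≤
      r ^ q * ⨍ x in ball x₀ r, ‖fderiv ℝ u x‖ ^ q ∂μ :=
    calc ((ρ / r) ^ Module.finrank ℝ E) ^ q ≤ (⨍ x in ball x₀ r, |u x| ∂μ) ^ q := by
          gcongr
          exact div_pow_finrank_le_setAverage_ball hρ hρr hint (fun x => abs_nonneg _) hu1
      _ ≤ r ^ q * ⨍ x in ball x₀ r, ‖fderiv ℝ u x‖ ^ q ∂μ :=
          rpow_setAverage_ball_abs_le hq hr hu hsupp
  calc ((ρ / r) ^ Module.finrank ℝ E) ^ q * μ.real (ball 0 1) * r ^ (Module.finrank ℝ E - q)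
      ≤ (r ^ q * ⨍ x in ball x₀ r, ‖fderiv ℝ u x‖ ^ q ∂μ) * μ.real (ball 0 1) *
          r ^ (Module.finrank ℝ E - q) := by gcongr
    _ = ∫ x in ball x₀ r, ‖fderiv ℝ u x‖ ^ q ∂μ := by
        rw [setAverage_eq, measureReal_ball_eq_pow_finrank_mul hr, Real.rpow_sub hr,
          Real.rpow_natCast, smul_eq_mul]
        field_simp

variable (μ) in
theorem counterexample_energy_lower_bound_general [Nontrivial E] {p a : ℝ} (hp : 0 ≤ p)
    (hq : 1 ≤ q) (hpq : p < q) (ha : 0 < a) :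
    (∃ c : ℝ, 0 < c ∧ ∀ (x₀ : E) (r : ℝ), 0 < r → ∀ u : E → ℝ, (∃ K, LipschitzWith K u) →
      tsupport u ⊆ ball x₀ r → (∀ x ∈ closedBall x₀ (r / 2), 1 ≤ |u x|) →
        r ^ (Module.finrank ℝ E - q) ≤
          c * ∫ x in ball x₀ r, (‖fderiv ℝ u x‖ ^ p + a * ‖fderiv ℝ u x‖ ^ q) ∂μ) ∧
    ∀ C : ℝ, ∃ rC : ℝ, 0 < rC ∧ ∀ r : ℝ, 0 < r → r < rC →
      C * r ^ (q - Module.finrank ℝ E) < r ^ (p - Module.finrank ℝ E) := by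
  constructor
  · set κ := ((1 / 2 : ℝ) ^ Module.finrank ℝ E) ^ q * μ.real (ball 0 1)
    have hω : 0 < μ.real (ball (0 : E) 1) := measureReal_ball_pos one_pos
    refine ⟨(a * κ)⁻¹, by positivity, fun x₀ r hr u ⟨K, hu⟩ hsupp hu1 => ?_⟩
    have henergy := mul_rpow_finrank_sub_le_setIntegral_norm_fderiv_rpow (μ := μ) hq (half_pos hr)
      (half_le_self hr.le) hu hsupp fun x hx => hu1 x (ball_subset_closedBall hx)
    rw [show r / 2 / r = 1 / 2 by field_simp] at henergy
    rw [le_inv_mul_iff₀ (by positivity), mul_assoc]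
    calc a * (κ * r ^ (Module.finrank ℝ E - q))
        ≤ a * ∫ x in ball x₀ r, ‖fderiv ℝ u x‖ ^ q ∂μ := by gcongr
      _ ≤ ∫ x in ball x₀ r, (‖fderiv ℝ u x‖ ^ p + a * ‖fderiv ℝ u x‖ ^ q) ∂μ :=
          mul_setIntegral_norm_fderiv_rpow_le hp (zero_le_one.trans hq) hu
            measure_ball_lt_top.ne
  · intro C
    obtain ⟨rC, hrC, hlt⟩ := mem_nhdsGT_iff_exists_Ioo_subset.1
      (eventually_mul_rpow_lt_rpow (sub_lt_sub_right hpq (Module.finrank ℝ E : ℝ)) C)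
    exact ⟨rC, hrC, fun r hr hr' => hlt ⟨hr, hr'⟩⟩

end NormedSpace

/-- **Counterexample, part 3** (Example 5.3): a lower bound of order `r^{n-q}` for
the double-phase energy of any admissible competitor for the condenser
`(B̄(0,r/2), B(0,r))`; since `C r^{q-n} < r^{p-n}` for all sufficiently small
`r`, this lower bound is of strictly larger order than the `p`-capacity scale
`r^{n-p}` as `r → 0`. -/
theorem counterexample_energy_lower_bound
    (n : ℕ) (hn : 0 < n) (p q ao : ℝ)
    (hp : 1 < p) (hpq : p < q) (hao : 0 < ao) :
    (∃ c : ℝ, 0 < c ∧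
      ∀ r : ℝ, 0 < r → r ≤ 1 →
        ∀ u : En n → ℝ, (∃ K, LipschitzWith K u) → (∀ x, 0 ≤ u x) →
          HasCompactSupport u → tsupport u ⊆ ball (0 : En n) r →
          (∀ x ∈ closedBall (0 : En n) (r / 2), 1 ≤ u x) →
          r ^ ((n : ℝ) - q) ≤
            c * (∫ x in ball (0 : En n) r,
              (gnorm u x ^ p + ao * gnorm u x ^ q))) ∧
    (∀ C : ℝ, 0 < C → ∃ rC : ℝ, 0 < rC ∧ ∀ r : ℝ, 0 < r → r < rC →
      C * r ^ (q - (n : ℝ)) < r ^ (p - (n : ℝ))) := by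
  have : Nonempty (Fin n) := ⟨⟨0, hn⟩⟩
  obtain ⟨⟨c, hc, hbound⟩, hscale⟩ := counterexample_energy_lower_bound_general
    (volume : Measure (En n)) (by linarith) (hp.le.trans hpq.le) hpq hao
  simp only [finrank_euclideanSpace_fin] at hbound hscale
  exact ⟨⟨c, hc, fun r hr _ u hu _ _ hsupp hu1 => hbound 0 r hr u hu hsupp
    fun x hx => (hu1 x hx).trans (le_abs_self _)⟩, fun C _ => hscale C⟩
end
end
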